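/- If G is a 4-connected graph then either its circumference satisfies c ≥ 4δ − 2κ, or G has a dominating cycle. -/

import Mathlib

open SimpleGraph

variable {V : Type*}

/-- `G` is `k`-connected: more than `k` vertices and removing fewer than `k`
vertices leaves a connected graph. -/
def KConnected (G : SimpleGraph V) [Fintype V] (k : ℕ) : Prop :=
  k < Fintype.card V ∧
    ∀ S : Finset V, S.card < k → (G.induce ((↑S : Set V)ᶜ)).Connected

/-- vertex connectivity `κ`. -/
noncomputable def connectivity (G : SimpleGraph V) [Fintype V] : ℕ :=
  sSup {k | KConnected G k}

/-- independence number `α`. -/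
noncomputable def indepNumber (G : SimpleGraph V) [Fintype V] : ℕ :=
  sSup {k | ∃ s : Finset V, (∀ u ∈ s, ∀ v ∈ s, ¬ G.Adj u v) ∧ s.card = k}

/-- circumference `c`: length of a longest cycle. -/
noncomputable def circumference (G : SimpleGraph V) [Fintype V] : ℕ :=
  sSup {n | ∃ (v : V) (w : G.Walk v v), w.IsCycle ∧ w.length = n}

/-- `w` is a longest cycle of `G`. -/
def IsLongestCycle {G : SimpleGraph V} {v : V} (w : G.Walk v v) : Prop :=
  w.IsCycle ∧ ∀ (u : V) (w' : G.Walk u u), w'.IsCycle → w'.length ≤ w.length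

/-- dominating cycle: every edge has an endpoint on the cycle. -/
def IsDominatingCycle {G : SimpleGraph V} {v : V} (w : G.Walk v v) : Prop :=
  w.IsCycle ∧ ∀ x y, G.Adj x y → x ∈ w.support ∨ y ∈ w.support

/-- generalized cycle of length `n` with vertex set `W`: single vertices are
cycles of length 1, edges are cycles of length 2. -/
def ExtCycle (G : SimpleGraph V) (W : Set V) (n : ℕ) : Prop :=
  (n = 1 ∧ ∃ v : V, W = {v}) ∨
  (n = 2 ∧ ∃ u v : V, G.Adj u v ∧ W = {u, v}) ∨
  (3 ≤ n ∧ ∃ (v : V) (w : G.Walk v v), w.IsCycle ∧ w.length = n ∧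
      W = {x | x ∈ w.support})

/-- `p̄`: the length of a longest path in `G \ C`. -/
noncomputable def pathBar (G : SimpleGraph V) [Fintype V] {v : V} (w : G.Walk v v) : ℕ :=
  sSup {n | ∃ (a b : {x : V | x ∉ w.support})
      (p : (G.induce {x : V | x ∉ w.support}).Walk a b), p.IsPath ∧ p.length = n}

/-- `c̄`: the length of a longest (generalized) cycle in `G \ C`. -/
noncomputable def cycBar (G : SimpleGraph V) [Fintype V] {v : V} (w : G.Walk v v) : ℕ :=
  sSup {n | ∃ W, ExtCycle (G.induce {x : V | x ∉ w.support}) W n}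

/-- `CD_m`-cycle: every (generalized) cycle of length at least `m` meets `w`. -/
def IsCDCycle (G : SimpleGraph V) {v : V} (w : G.Walk v v) (m : ℕ) : Prop :=
  w.IsCycle ∧ ∀ (W : Set V) (n : ℕ), ExtCycle G W n → m ≤ n → ∃ x ∈ W, x ∈ w.support

/-
Let `C` be a longest cycle, of length `n`, missing an edge of `G`; we show `4δ ≤ n + 2κ`. Replacing
the segment of `C` between two consecutive neighbours (attachments) of a component `H` of `G - C` by
a detour through `H` shows that this segment is long.

If some `H` has at least three vertices, long paths inside `H` and the many attachments forced by
`4`-connectedness give `4δ ≤ n + 8`.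

Otherwise every component of `G - C` is a vertex or an edge. Take a minimum cut `(A, B, S)`. If at
least `2δ` edges of `C`, counting also the vertices of `S` off `C`, are not contained in `B`, and
likewise for `A`, then the bound follows because an edge of `C` contained in neither `A` nor `B` has
an end in `S`. If this fails for, say, the edges not contained in `A`, then `B` lies on `C` and at
most one attachment of the edge off `C` is followed, and at most one preceded, by a vertex of `B`.
So almost all vertices of `B` that are not attachments lie strictly inside the gaps between
attachments, and counting them there lengthens `C` enough.
-/

namespace LongestCycle

open Finset

open scoped Classical

/-- `G` has a path of length at least `m` from `u` to `v` all of whose vertices lie in `R`. -/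
def LinkedIn (G : SimpleGraph V) (R : Finset V) (u v : V) (m : ℕ) : Prop :=
  ∃ p : G.Walk u v, p.IsPath ∧ (∀ x ∈ p.support, x ∈ R) ∧ m ≤ p.length

/-- `R` induces a connected subgraph of `G`. -/
def ConnSet (G : SimpleGraph V) (R : Finset V) : Prop :=
  (G.induce (R : Set V)).Connected

section Paths

variable {G : SimpleGraph V} {R R' T : Finset V} {u v w a b : V} {m m' : ℕ}

lemma LinkedIn.left_mem (h : LinkedIn G R u v m) : u ∈ R := by
  obtain ⟨p, -, hpR, -⟩ := h
  exact hpR u p.start_mem_support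

lemma LinkedIn.mono (h : LinkedIn G R u v m) (hR : R ⊆ R') (hm : m' ≤ m) :
    LinkedIn G R' u v m' := by
  obtain ⟨p, hp, hpR, hlen⟩ := h
  exact ⟨p, hp, fun x hx => hR (hpR x hx), hm.trans hlen⟩

lemma LinkedIn.refl (hu : u ∈ R) : LinkedIn G R u u 0 :=
  ⟨.nil, .nil, by simpa using hu, le_rfl⟩

lemma LinkedIn.symm (h : LinkedIn G R u v m) : LinkedIn G R v u m := by
  obtain ⟨p, hp, hpR, hlen⟩ := h
  exact ⟨p.reverse, hp.reverse, by simpa using hpR, by simpa using hlen⟩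

lemma LinkedIn.right_mem (h : LinkedIn G R u v m) : v ∈ R :=
  h.symm.left_mem

lemma LinkedIn.cons (h : LinkedIn G R u v m) (hw : w ∉ R) (hwu : G.Adj w u) :
    LinkedIn G (insert w R) w v (m + 1) := by
  obtain ⟨p, hp, hpR, hlen⟩ := h
  refine ⟨.cons hwu p, hp.cons fun hwp => hw (hpR w hwp), fun x hx => ?_, by simpa using hlen⟩
  rw [Walk.support_cons, List.mem_cons] at hx
  exact mem_insert.2 (hx.imp_right (hpR x))

lemma LinkedIn.trans (h : LinkedIn G R u v m) (h' : LinkedIn G R' v w m')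
    (hRR' : R ∩ R' ⊆ {v}) : LinkedIn G (R ∪ R') u w (m + m') := by
  obtain ⟨p, hp, hpR, hlen⟩ := h
  obtain ⟨q, hq, hqR, hlen'⟩ := h'
  have hq' : (v :: q.support.tail).Nodup := by
    rw [Walk.cons_tail_support]
    exact hq.support_nodup
  have hdisj : p.support.Disjoint q.support.tail := fun x hxp hxq => by
    have hxv : x ∈ ({v} : Finset V) :=
      hRR' (mem_inter.2 ⟨hpR x hxp, hqR x (List.mem_of_mem_tail hxq)⟩)
    exact (List.nodup_cons.1 hq').1 (mem_singleton.1 hxv ▸ hxq)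
  refine ⟨p.append q, ?_, fun x hx => ?_, by rw [Walk.length_append]; omega⟩
  · rw [Walk.isPath_def, Walk.support_append, List.nodup_append']
    exact ⟨hp.support_nodup, hq'.of_cons, hdisj⟩
  · rw [Walk.mem_support_append_iff] at hx
    exact mem_union.2 (hx.imp (hpR x) (hqR x))

lemma LinkedIn.append (h : LinkedIn G R u a m) (h' : LinkedIn G R' b v m')
    (hd : Disjoint R R') (hab : G.Adj a b) : LinkedIn G (R ∪ R') u v (m + m' + 1) := by
  have haR' : a ∉ R' := Finset.disjoint_left.1 hd h.right_mem
  refine (h.trans (h'.cons haR' hab) ?_).mono ?_ (by omega)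
  · rw [inter_insert_of_mem h.right_mem, disjoint_iff_inter_eq_empty.1 hd, insert_empty_eq]
  · rw [union_insert, insert_eq_of_mem (mem_union_left _ h.right_mem)]

lemma LinkedIn.exists_isCycle (h : LinkedIn G R u v m) (hvu : G.Adj v u) (hm : 2 ≤ m) :
    ∃ w : G.Walk v v, w.IsCycle ∧ m + 1 ≤ w.length := by
  obtain ⟨p, hp, -, hlen⟩ := h
  refine ⟨.cons hvu p, ?_, by simpa using hlen⟩
  rw [Walk.isCycle_iff_isPath_tail_and_le_length]
  exact ⟨by simpa using hp, by rw [Walk.length_cons]; omega⟩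

lemma ConnSet.nonempty (h : ConnSet G R) : R.Nonempty := by
  obtain ⟨x⟩ := Connected.nonempty h
  exact ⟨x, x.2⟩

lemma ConnSet.linkedIn (h : ConnSet G R) (hu : u ∈ R) (hv : v ∈ R) : LinkedIn G R u v 0 := by
  obtain ⟨p, hp⟩ := (Connected.preconnected h ⟨u, hu⟩ ⟨v, hv⟩).exists_isPath
  let f : G.induce (R : Set V) →g G := (Embedding.induce _).toHom
  refine ⟨p.map f, hp.map Subtype.val_injective, fun x (hx : x ∈ (p.map f).support) => ?_,
    Nat.zero_le _⟩
  rw [Walk.support_map, List.mem_map] at hx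
  obtain ⟨y, -, rfl⟩ := hx
  exact y.2

lemma ConnSet.eq_of_closed (h : ConnSet G R) (hTR : T ⊆ R) (hT : T.Nonempty)
    (hcl : ∀ a ∈ T, ∀ b ∈ R, G.Adj a b → b ∈ T) : T = R := by
  obtain ⟨t, ht⟩ := hT
  refine Subset.antisymm hTR fun x hx => ?_
  by_contra hxT
  obtain ⟨p⟩ := Connected.preconnected h ⟨t, hTR ht⟩ ⟨x, hx⟩
  obtain ⟨d, -, hd, hd'⟩ := p.exists_boundary_dart {y | y.1 ∈ T} ht hxT
  exact hd' (hcl _ hd _ d.snd.2 d.adj)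

lemma connSet_of_forall_closed_mem (hu : u ∈ R)
    (h : ∀ T ⊆ R, T.Nonempty → (∀ a ∈ T, ∀ b ∈ R, G.Adj a b → b ∈ T) → u ∈ T) :
    ConnSet G R := by
  refine (connected_iff_exists_forall_reachable _).2 ⟨⟨u, hu⟩, fun ⟨v, hv⟩ => ?_⟩
  have huT := h (R.filter fun w => ∃ hw, (G.induce (R : Set V)).Reachable ⟨v, hv⟩ ⟨w, hw⟩)
    (filter_subset _ _) ⟨v, mem_filter.2 ⟨hv, hv, .rfl⟩⟩ fun a ha b hb hab => by
      obtain ⟨-, haR, hva⟩ := mem_filter.1 ha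
      exact mem_filter.2 ⟨hb, hb, hva.trans (Adj.reachable (by simpa using hab))⟩
  exact (mem_filter.1 huT).2.2.symm

lemma connSet_singleton (G : SimpleGraph V) (v : V) : ConnSet G {v} :=
  connSet_of_forall_closed_mem (mem_singleton_self v) fun _ hTR hT _ => by
    rw [(subset_singleton_iff.1 hTR).resolve_left hT.ne_empty]
    exact mem_singleton_self v

lemma connSet_pair (hab : G.Adj a b) : ConnSet G {a, b} := by
  rw [ConnSet, coe_pair]
  exact induce_pair_connected_of_adj hab

lemma ConnSet.insert (h : ConnSet G R) (ha : a ∈ R) (hab : G.Adj a b) :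
    ConnSet G (insert b R) := by
  have hunion := connected_induce_union (t := {b}) (Connected.preconnected h) (.of_subsingleton)
    ha rfl hab
  rwa [Set.union_comm, ← Set.insert_eq, ← coe_insert] at hunion

end Paths

/-- `c` traverses a cycle of length `n` of `G`, and no cycle of `G` is longer. Indexing by
`ZMod n` makes the positions on the cycle a cyclic group. -/
structure IsMaxCycle (G : SimpleGraph V) {n : ℕ} (c : ZMod n → V) : Prop where
  three_le : 3 ≤ n
  injective : Function.Injective c
  adj : ∀ i, G.Adj (c i) (c (i + 1))
  length_le : ∀ {v : V} (w : G.Walk v v), w.IsCycle → w.length ≤ n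

/-- The `k` vertices `c i, c (i + 1), …, c (i + k - 1)`. -/
noncomputable def arcSet {n : ℕ} (c : ZMod n → V) (i : ZMod n) (k : ℕ) : Finset V :=
  (range k).image fun t : ℕ => c (i + t)

section Arcs

variable {G : SimpleGraph V} {n : ℕ} {c : ZMod n → V}

lemma eq_of_natCast_eq {s t : ℕ} (hs : s < n) (ht : t < n) (h : (s : ZMod n) = t) : s = t :=
  Nat.ModEq.eq_of_lt_of_lt ((ZMod.natCast_eq_natCast_iff s t n).1 h) hs ht

lemma mem_arcSet {i : ZMod n} {k : ℕ} {v : V} :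
    v ∈ arcSet c i k ↔ ∃ t < k, c (i + t) = v := by
  simp only [arcSet, mem_image, mem_range]

lemma IsMaxCycle.linkedIn_arcSet (hc : IsMaxCycle G c) (i : ZMod n) {k : ℕ} (hk : k < n) :
    LinkedIn G (arcSet c i (k + 1)) (c i) (c (i + k)) k := by
  induction k with
  | zero => simpa using LinkedIn.refl (mem_arcSet.2 ⟨0, zero_lt_one, by simp⟩)
  | succ k ih =>
    have hnew : c (i + ↑(k + 1)) ∉ arcSet c i (k + 1) := fun hmem => by
      obtain ⟨t, ht, hct⟩ := mem_arcSet.1 hmem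
      have := eq_of_natCast_eq (by omega) hk (add_left_cancel (hc.injective hct))
      omega
    have hadj : G.Adj (c (i + ↑(k + 1))) (c (i + k)) := by
      rw [Nat.cast_succ, ← add_assoc]
      exact (hc.adj _).symm
    rw [arcSet, range_add_one, image_insert]
    exact ((ih (by omega)).symm.cons hnew hadj).symm

lemma IsMaxCycle.disjoint_arcSet (hc : IsMaxCycle G c) (i : ZMod n) {k m : ℕ} (hkm : k + m ≤ n) :
    Disjoint (arcSet c i k) (arcSet c (i + k) m) := by
  rw [Finset.disjoint_left]
  rintro _ hv hv'
  obtain ⟨s, hs, rfl⟩ := mem_arcSet.1 hv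
  obtain ⟨t, ht, h⟩ := mem_arcSet.1 hv'
  have hst := hc.injective h
  rw [add_assoc, ← Nat.cast_add] at hst
  have := eq_of_natCast_eq (by omega) (by omega) (add_left_cancel hst)
  omega

lemma disjoint_arcSet_of_forall_notMem {R : Finset V} (hR : ∀ k, c k ∉ R) (i : ZMod n) (k : ℕ) :
    Disjoint R (arcSet c i k) := by
  rw [Finset.disjoint_left]
  intro v hv hv'
  obtain ⟨t, -, rfl⟩ := mem_arcSet.1 hv'
  exact hR _ hv

lemma IsMaxCycle.lt_of_linkedIn (hc : IsMaxCycle G c) {R : Finset V} {u v : V} {m : ℕ}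
    (h : LinkedIn G R u v m) (hvu : G.Adj v u) : m < n := by
  have h3 := hc.three_le
  rcases lt_or_ge m 2 with hm | hm
  · omega
  · obtain ⟨w, hw, hlen⟩ := h.exists_isCycle hvu hm
    exact hlen.trans (hc.length_le w hw)

/- Replacing the segment of length `t` by the detour through `R` yields a cycle of length at least
`n - t + m + 2`. -/
lemma IsMaxCycle.add_two_le_of_detour (hc : IsMaxCycle G c) {R : Finset V} (hR : ∀ k, c k ∉ R)
    {i : ZMod n} {t m : ℕ} {u v : V} (ht : 1 ≤ t) (htn : t < n) (h : LinkedIn G R u v m)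
    (hu : G.Adj (c i) u) (hv : G.Adj (c (i + t)) v) : m + 2 ≤ t := by
  have harc := hc.linkedIn_arcSet (i + t) (k := n - t) (by omega)
  have hi : i + (t : ZMod n) + ((n - t : ℕ) : ZMod n) = i := by
    rw [add_assoc, ← Nat.cast_add, Nat.add_sub_cancel' htn.le, ZMod.natCast_self, add_zero]
  rw [hi] at harc
  have := hc.lt_of_linkedIn (h.append harc (disjoint_arcSet_of_forall_notMem hR _ _) hv.symm) hu
  omega

lemma IsMaxCycle.reverse (hc : IsMaxCycle G c) : IsMaxCycle G fun k => c (-k) := by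
  refine ⟨hc.three_le, hc.injective.comp neg_injective, fun i => ?_, hc.length_le⟩
  have hadj := (hc.adj (-(i + 1))).symm
  rwa [neg_add, neg_add_cancel_right, ← neg_add] at hadj

end Arcs

section Gaps

variable {n : ℕ} {U Z Z' : Finset (ZMod n)} {i j : ZMod n}

/-- The distance from `i` to the first element of `U` strictly after `i` in the cyclic order, which
is `i` itself at distance `n` if `U = {i}`. It is `0` if `U` is empty. -/
noncomputable def gap (U : Finset (ZMod n)) (i : ZMod n) : ℕ :=
  sInf {t : ℕ | 1 ≤ t ∧ i + t ∈ U}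

/-- The first element of `U` strictly after `i` in the cyclic order. -/
noncomputable def next (U : Finset (ZMod n)) (i : ZMod n) : ZMod n := i + gap U i

lemma notMem_of_lt_gap {t : ℕ} (ht : 1 ≤ t) (h : t < gap U i) : i + (t : ZMod n) ∉ U :=
  fun hm => Nat.notMem_of_lt_sInf h ⟨ht, hm⟩

lemma gap_le {t : ℕ} (ht : 1 ≤ t) (h : i + (t : ZMod n) ∈ U) : gap U i ≤ t :=
  Nat.sInf_le ⟨ht, h⟩

lemma eq_and_eq_of_add_eq_add {s t : ℕ} (hi : i ∈ U) (hst : s ≤ t) (ht : t - s < gap U j)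
    (h : i + (s : ZMod n) = j + t) : i = j ∧ s = t := by
  have hij : i = j + ((t - s : ℕ) : ZMod n) := by
    rw [Nat.cast_sub hst, ← add_sub_assoc, ← h, add_sub_cancel_right]
  rcases Nat.eq_zero_or_pos (t - s) with h0 | hpos
  · rw [h0, Nat.cast_zero, add_zero] at hij
    exact ⟨hij, by omega⟩
  · exact absurd (hij ▸ hi) (notMem_of_lt_gap hpos ht)

/-- The elements of `Z ∪ Z'` starting a segment with one end in `Z` and the other in `Z'`. -/
noncomputable def crossing (Z Z' : Finset (ZMod n)) : Finset (ZMod n) :=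
  (Z ∪ Z').filter fun i => (i ∈ Z ∧ next (Z ∪ Z') i ∈ Z') ∨ (i ∈ Z' ∧ next (Z ∪ Z') i ∈ Z)

lemma crossing_comm (Z Z' : Finset (ZMod n)) : crossing Z Z' = crossing Z' Z := by
  simp only [crossing, union_comm, or_comm]

variable [NeZero n]

lemma exists_eq_add_natCast (i j : ZMod n) : ∃ t < n, j = i + (t : ZMod n) :=
  ⟨(j - i).val, ZMod.val_lt _, by simp⟩

lemma gap_spec (hU : U.Nonempty) (i : ZMod n) : 1 ≤ gap U i ∧ next U i ∈ U := by
  obtain ⟨u, hu⟩ := hU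
  obtain ⟨t, -, rfl⟩ := exists_eq_add_natCast i u
  exact Nat.sInf_mem (s := {t : ℕ | 1 ≤ t ∧ i + t ∈ U})
    ⟨t + n, by have := NeZero.pos n; omega, by simpa using hu⟩

lemma one_le_gap (hU : U.Nonempty) (i : ZMod n) : 1 ≤ gap U i := (gap_spec hU i).1

lemma next_mem (hU : U.Nonempty) (i : ZMod n) : next U i ∈ U := (gap_spec hU i).2

lemma gap_lt (hU : 2 ≤ #U) (i : ZMod n) : gap U i < n := by
  obtain ⟨u, hu, hui⟩ := exists_mem_ne (one_lt_two.trans_le hU) i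
  obtain ⟨t, ht, rfl⟩ := exists_eq_add_natCast i u
  refine lt_of_le_of_lt (gap_le (Nat.one_le_iff_ne_zero.2 ?_) hu) ht
  rintro rfl
  exact hui (by simp)

/- The half-open segments from the elements of `U` to their successors are disjoint. -/
lemma sum_gap_le (U : Finset (ZMod n)) : ∑ i ∈ U, gap U i ≤ n := by
  have hinj : Set.InjOn (fun p : Σ _ : ZMod n, ℕ => p.1 + (p.2 : ZMod n))
      (U.sigma fun i => range (gap U i)) := by
    rintro ⟨i, s⟩ hp ⟨j, t⟩ hq h
    simp only [coe_sigma, Set.mem_sigma_iff, mem_coe, mem_range] at hp hq h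
    rcases le_total s t with hst | hts
    · obtain ⟨rfl, rfl⟩ := eq_and_eq_of_add_eq_add hp.1 hst (by omega) h
      rfl
    · obtain ⟨rfl, rfl⟩ := eq_and_eq_of_add_eq_add hq.1 hts (by omega) h.symm
      rfl
  simpa using card_le_card_of_injOn (t := univ) _ (by simp) hinj

lemma sum_le_of_le_gap (w : ZMod n → ℕ) (h : ∀ i ∈ U, w i ≤ gap U i) : ∑ i ∈ U, w i ≤ n :=
  (sum_le_sum h).trans (sum_gap_le U)

lemma next_injOn (U : Finset (ZMod n)) : Set.InjOn (next U) U := by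
  have key : ∀ i ∈ U, ∀ j, gap U i ≤ gap U j → next U i = next U j → i = j := by
    intro i hi j hle h
    have := one_le_gap ⟨i, hi⟩ i
    exact (eq_and_eq_of_add_eq_add hi hle (by omega) h).1
  intro i hi j hj h
  rcases le_total (gap U i) (gap U j) with hle | hle
  · exact key i hi j hle h
  · exact (key j hj i hle h.symm).symm

lemma exists_eq_add_of_lt_gap (hU : U.Nonempty) (k : ZMod n) :
    ∃ i ∈ U, ∃ t < gap U i, k = i + (t : ZMod n) := by
  have hex : ∃ t : ℕ, k - t ∈ U := by
    obtain ⟨u, hu⟩ := hU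
    obtain ⟨t, -, rfl⟩ := exists_eq_add_natCast u k
    exact ⟨t, by simpa using hu⟩
  refine ⟨k - (Nat.find hex : ℕ), Nat.find_spec hex, Nat.find hex, ?_, by simp⟩
  by_contra! hle
  have hpos := one_le_gap hU (k - (Nat.find hex : ZMod n))
  refine Nat.find_min hex (m := Nat.find hex - gap U (k - (Nat.find hex : ZMod n))) (by omega) ?_
  rw [Nat.cast_sub hle, ← sub_add]
  exact next_mem hU _

lemma card_le_sum_card_filter_gap (hU : U.Nonempty) (P : Finset (ZMod n)) :
    #P ≤ ∑ i ∈ U, #((range (gap U i)).filter fun t : ℕ => i + (t : ZMod n) ∈ P) := by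
  have hcover : P ⊆ U.biUnion fun i => ((range (gap U i)).filter
      fun t : ℕ => i + (t : ZMod n) ∈ P).image fun t : ℕ => i + (t : ZMod n) := by
    intro k hk
    obtain ⟨i, hi, t, ht, rfl⟩ := exists_eq_add_of_lt_gap hU k
    simp only [mem_biUnion, mem_image, mem_filter, mem_range]
    exact ⟨i, hi, t, ⟨ht, hk⟩, rfl⟩
  exact (card_le_card hcover).trans
    (card_biUnion_le.trans (sum_le_sum fun _ _ => card_image_le))

lemma forall_of_succ {p : ZMod n → Prop} (h : ∀ i, p i → p (i + 1)) (hi : p i) (j : ZMod n) :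
    p j := by
  obtain ⟨t, -, rfl⟩ := exists_eq_add_natCast i j
  induction t with
  | zero => simpa using hi
  | succ t ih => simpa [add_assoc] using h _ ih

lemma eq_of_next_closed {T : Finset (ZMod n)} (hTU : T ⊆ U) (hT : T.Nonempty)
    (hcl : ∀ i ∈ T, next U i ∈ T) : T = U := by
  have key : ∀ t : ℕ, ∀ i ∈ T, i + (t : ZMod n) ∈ U → i + (t : ZMod n) ∈ T := by
    intro t
    induction t using Nat.strong_induction_on with
    | _ t ih =>
      intro i hi h
      rcases Nat.eq_zero_or_pos t with rfl | hpos
      · simpa using hi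
      · have heq : i + (t : ZMod n) = next U i + ((t - gap U i : ℕ) : ZMod n) := by
          rw [Nat.cast_sub (gap_le hpos h), next, add_assoc, add_sub_cancel]
        rw [heq] at h ⊢
        have := one_le_gap (hT.mono hTU) i
        exact ih _ (by omega) _ (hcl i hi) h
  obtain ⟨i, hi⟩ := hT
  refine Subset.antisymm hTU fun u hu => ?_
  obtain ⟨t, -, rfl⟩ := exists_eq_add_natCast i u
  exact key t i hi hu

lemma inter_subset_crossing (Z Z' : Finset (ZMod n)) : Z ∩ Z' ⊆ crossing Z Z' := by
  intro i hi
  obtain ⟨hiZ, hiZ'⟩ := mem_inter.1 hi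
  have hiU : i ∈ Z ∪ Z' := mem_union_left _ hiZ
  refine mem_filter.2 ⟨hiU, ?_⟩
  rcases mem_union.1 (next_mem ⟨i, hiU⟩ i) with h | h
  · exact Or.inr ⟨hiZ', h⟩
  · exact Or.inl ⟨hiZ, h⟩

lemma exists_mem_crossing_sdiff (hZ : (Z \ Z').Nonempty) (hZ' : Z'.Nonempty) :
    ∃ i ∈ crossing Z Z', i ∉ Z' := by
  have hsub : Z \ Z' ⊆ Z ∪ Z' := sdiff_subset.trans subset_union_left
  have hne : Z \ Z' ≠ Z ∪ Z' := fun h => by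
    obtain ⟨k, hk⟩ := hZ'
    have hk' : k ∈ Z \ Z' := h ▸ mem_union_right _ hk
    exact (mem_sdiff.1 hk').2 hk
  obtain ⟨i, hi, hnext⟩ : ∃ i ∈ Z \ Z', next (Z ∪ Z') i ∉ Z \ Z' := by
    by_contra! h
    exact hne (eq_of_next_closed hsub hZ h)
  have hnextU := next_mem ⟨i, hsub hi⟩ i
  obtain ⟨hiZ, hiZ'⟩ := mem_sdiff.1 hi
  refine ⟨i, mem_filter.2 ⟨hsub hi, Or.inl ⟨hiZ, ?_⟩⟩, hiZ'⟩
  simp only [mem_sdiff, mem_union, not_and, not_not] at hnext hnextU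
  exact hnextU.elim hnext id

lemma two_le_card_crossing (hZ : 2 ≤ #Z) (hZ' : Z'.Nonempty) : 2 ≤ #(crossing Z Z') := by
  rcases (Z \ Z').eq_empty_or_nonempty with h | h
  · have hsub := inter_subset_crossing Z Z'
    rw [inter_eq_left.2 (sdiff_eq_empty_iff_subset.1 h)] at hsub
    exact hZ.trans (card_le_card hsub)
  · obtain ⟨i, hi, hiZ'⟩ := exists_mem_crossing_sdiff h hZ'
    obtain ⟨j, hj, hji⟩ : ∃ j ∈ crossing Z Z', j ≠ i := by
      rcases (Z ∩ Z').eq_empty_or_nonempty with hdisj | ⟨j, hj⟩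
      · rw [← disjoint_iff_inter_eq_empty] at hdisj
        obtain ⟨j, hj, hjZ⟩ := exists_mem_crossing_sdiff (by rwa [hdisj.sdiff_eq_right])
          (h.mono sdiff_subset)
        refine ⟨j, crossing_comm Z Z' ▸ hj, ?_⟩
        rintro rfl
        exact (mem_union.1 (mem_filter.1 hi).1).elim hjZ hiZ'
      · refine ⟨j, inter_subset_crossing Z Z' hj, ?_⟩
        rintro rfl
        exact hiZ' (mem_inter.1 hj).2
    exact one_lt_card.2 ⟨j, hj, i, hi, hji⟩

end Gaps

section Connectivity

variable {G : SimpleGraph V} {k : ℕ} {v : V} {w : G.Walk v v}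

lemma getVert_val_add_one (hw : w.IsCycle) (i : ZMod w.length) :
    w.getVert (i + 1).val = w.getVert (i.val + 1) := by
  have h3 := hw.three_le_length
  have : NeZero w.length := ⟨by omega⟩
  have hi := ZMod.val_lt i
  have hi1 : i + 1 = ((i.val + 1 : ℕ) : ZMod w.length) := by simp
  rcases Nat.lt_or_ge (i.val + 1) w.length with hlt | hge
  · rw [hi1, ZMod.val_cast_of_lt hlt]
  · have hlast : i.val + 1 = w.length := by omega
    rw [hi1, hlast, ZMod.natCast_self, ZMod.val_zero, w.getVert_zero, w.getVert_length]

lemma isMaxCycle_getVert (hw : IsLongestCycle w) :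
    IsMaxCycle G fun i : ZMod w.length => w.getVert i.val := by
  have h3 := hw.1.three_le_length
  have : NeZero w.length := ⟨by omega⟩
  refine ⟨h3, fun i j hij => ZMod.val_injective _ ?_, fun i => ?_, hw.2 _⟩
  · have hi := ZMod.val_lt i
    have hj := ZMod.val_lt j
    exact hw.1.getVert_injOn' (by simp; omega) (by simp; omega) hij
  · rw [getVert_val_add_one hw.1]
    exact w.adj_getVert_succ (ZMod.val_lt i)

lemma bddAbove_length_isCycle [Finite V] (G : SimpleGraph V) :
    BddAbove {n | ∃ (v : V) (w : G.Walk v v), w.IsCycle ∧ w.length = n} := by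
  have := Fintype.ofFinite V
  refine ⟨Fintype.card V, ?_⟩
  rintro _ ⟨v, w, hw, rfl⟩
  simpa using hw.support_nodup.length_le_card

lemma exists_isLongestCycle [Finite V] (hw : w.IsCycle) :
    ∃ (u : V) (w' : G.Walk u u), IsLongestCycle w' := by
  have hbdd := bddAbove_length_isCycle G
  obtain ⟨u, w', hw', hlen⟩ := Nat.sSup_mem (by exact ⟨_, v, w, hw, rfl⟩) hbdd
  exact ⟨u, w', hw', fun u' w'' h => hlen ▸ le_csSup hbdd ⟨u', w'', h, rfl⟩⟩

variable [Fintype V]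

lemma length_le_circumference (hw : w.IsCycle) : w.length ≤ circumference G :=
  le_csSup (bddAbove_length_isCycle G) ⟨v, w, hw, rfl⟩

lemma connSet_compl (h : KConnected G k) {F : Finset V} (hF : #F < k) : ConnSet G Fᶜ := by
  rw [ConnSet, coe_compl]
  exact h.2 F hF

lemma union_eq_univ_of_kConnected (h : KConnected G k) {P F : Finset V} (hP : P.Nonempty)
    (hPF : Disjoint P F) (hcl : ∀ a ∈ P, ∀ b, G.Adj a b → b ∈ P ∪ F) (hF : #F < k) :
    P ∪ F = univ := by
  have hPc : P = Fᶜ := (connSet_compl h hF).eq_of_closed (subset_compl_iff_disjoint_right.2 hPF) hP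
    fun a ha b hb hab => (mem_union.1 (hcl a ha b hab)).resolve_right (mem_compl.1 hb)
  rw [hPc, union_comm, union_compl]

lemma le_degree_of_kConnected (h : KConnected G k) (v : V) : k ≤ G.degree v := by
  by_contra! hlt
  have huniv := union_eq_univ_of_kConnected h (P := {v}) (F := G.neighborFinset v) (by simp)
    (by simp) (by simp +contextual) hlt
  have hcard := card_union_le {v} (G.neighborFinset v)
  rw [huniv, card_univ, card_singleton, card_neighborFinset_eq_degree] at hcard
  have := h.1
  omega

lemma exists_isCycle_of_kConnected (h : KConnected G k) (hk : 2 ≤ k) :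
    ∃ (v : V) (w : G.Walk v v), w.IsCycle := by
  obtain ⟨v⟩ := Fintype.card_pos_iff.1 (Nat.zero_lt_of_lt h.1)
  obtain ⟨a, ha, b, hb, hab⟩ := one_lt_card.1 (hk.trans (le_degree_of_kConnected h v))
  rw [mem_neighborFinset] at ha hb
  have hconn : ConnSet G {v}ᶜ := connSet_compl h (by rw [card_singleton]; omega)
  obtain ⟨p, hp, hpv, -⟩ := hconn.linkedIn (u := a) (v := b) (by simpa using ha.ne')
    (by simpa using hb.ne')
  have hlen : 1 ≤ p.length := Nat.one_le_iff_ne_zero.2 fun h0 => hab (p.eq_of_length_eq_zero h0)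
  have hlink : LinkedIn G (insert v {v}ᶜ) v b 2 :=
    LinkedIn.cons (m := 1) ⟨p, hp, hpv, hlen⟩ (by simp) ha
  obtain ⟨w, hw, -⟩ := hlink.exists_isCycle hb.symm le_rfl
  exact ⟨b, w, hw⟩

lemma kConnected_of_le (h : KConnected G k) {m : ℕ} (hm : m ≤ k) : KConnected G m :=
  ⟨hm.trans_lt h.1, fun S hS => h.2 S (hS.trans_le hm)⟩

lemma le_connectivity (h : KConnected G k) : k ≤ connectivity G :=
  le_csSup ⟨Fintype.card V, fun _ hk => hk.1.le⟩ h

/-- `S` separates `A` from `B` in `G`, and the three sets partition the vertices. -/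
structure IsCut (G : SimpleGraph V) (A B S : Finset V) : Prop where
  left_right : Disjoint A B
  left_sep : Disjoint A S
  right_sep : Disjoint B S
  cover : ∀ v, v ∈ A ∨ v ∈ B ∨ v ∈ S
  not_adj : ∀ a ∈ A, ∀ b ∈ B, ¬ G.Adj a b

lemma exists_min_cut (hG : connectivity G + 1 < Fintype.card V) :
    ∃ A B S : Finset V, A.Nonempty ∧ B.Nonempty ∧ IsCut G A B S ∧ #S ≤ connectivity G := by
  have hnot : ¬ KConnected G (connectivity G + 1) := fun hk => by
    have := le_connectivity hk
    omega
  obtain ⟨S, hS, hconn⟩ : ∃ S : Finset V, #S < connectivity G + 1 ∧ ¬ ConnSet G Sᶜ := by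
    simp only [KConnected, hG, true_and, not_forall] at hnot
    obtain ⟨S, hS, hconn⟩ := hnot
    exact ⟨S, hS, by rwa [ConnSet, coe_compl]⟩
  obtain ⟨u, hu⟩ : Sᶜ.Nonempty := by
    rw [← card_pos, card_compl]
    omega
  obtain ⟨T, hT, hTne, hcl, huT⟩ : ∃ T ⊆ Sᶜ, T.Nonempty ∧
      (∀ a ∈ T, ∀ b ∈ Sᶜ, G.Adj a b → b ∈ T) ∧ u ∉ T := by
    by_contra! h
    exact hconn (connSet_of_forall_closed_mem hu h)
  refine ⟨T, Sᶜ \ T, S, hTne, ⟨u, mem_sdiff.2 ⟨hu, huT⟩⟩, ⟨disjoint_sdiff,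
    subset_compl_iff_disjoint_right.1 hT, disjoint_compl_left.mono_left sdiff_subset, fun v => ?_,
    fun a ha b hb hab => (mem_sdiff.1 hb).2 (hcl a ha b (mem_sdiff.1 hb).1 hab)⟩, by omega⟩
  rw [mem_sdiff, mem_compl]
  tauto

end Connectivity

section Pieces

variable {G : SimpleGraph V} {R I J : Finset V} {u v w p q : V} {k : ℕ}

/-- The degree of `w` into `R`. -/
noncomputable def degIn (G : SimpleGraph V) (R : Finset V) (w : V) : ℕ := #(R.filter (G.Adj w))

/-- `I` is a nonempty part of `R` avoiding the root `v` and attached to the rest of `R` only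
at `p`, like an end block of the graph induced by `R`. -/
structure IsPiece (G : SimpleGraph V) (R : Finset V) (v : V) (I : Finset V) (p : V) : Prop where
  nonempty : I.Nonempty
  subset : I ⊆ R
  root : v ∉ I
  attach : p ∈ R
  attach_notMem : p ∉ I
  closed : ∀ a ∈ I, ∀ b ∈ R, G.Adj a b → b ∈ insert p I

/-- A piece with the least number of vertices. -/
structure IsMinPiece (G : SimpleGraph V) (R : Finset V) (v : V) (I : Finset V) (p : V) : Prop
    extends IsPiece G R v I p where
  min : ∀ J q, IsPiece G R v J q → #I ≤ #J

lemma ConnSet.degIn_pos (h : ConnSet G R) (hw : w ∈ R) (hne : R ≠ {w}) : 0 < degIn G R w := by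
  rw [degIn, card_pos, nonempty_iff_ne_empty, Ne, filter_eq_empty_iff]
  intro h0
  refine hne (h.eq_of_closed (singleton_subset_iff.2 hw) (singleton_nonempty w) ?_).symm
  intro a ha b hb hab
  obtain rfl := mem_singleton.1 ha
  exact absurd hab (h0 hb)

lemma exists_isMinPiece (hv : v ∈ R) (hR : R ≠ {v}) : ∃ I p, IsMinPiece G R v I p := by
  have herase : IsPiece G R v (R.erase v) v := by
    refine ⟨?_, erase_subset _ _, by simp, hv, by simp, fun _ _ _ hb _ => by
      rwa [insert_erase hv]⟩
    rw [erase_nonempty hv]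
    exact (nontrivial_iff_ne_singleton hv).2 hR
  have hex : ∃ m, ∃ I p, IsPiece G R v I p ∧ #I = m := ⟨_, _, _, herase, rfl⟩
  obtain ⟨I, p, hI, hm⟩ := Nat.find_spec hex
  exact ⟨I, p, hI, fun J q hJ => hm ▸ Nat.find_min' hex ⟨J, q, hJ, rfl⟩⟩

lemma IsPiece.connSet_sdiff (h : IsPiece G R v I p) (hR : ConnSet G R) :
    ConnSet G (R \ I) := by
  refine connSet_of_forall_closed_mem (mem_sdiff.2 ⟨h.attach, h.attach_notMem⟩) ?_
  intro T hT hne hcl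
  by_contra hpT
  have hTR : T = R := hR.eq_of_closed (hT.trans sdiff_subset) hne fun a ha b hb hab => by
    refine hcl a ha b (mem_sdiff.2 ⟨hb, fun hbI => ?_⟩) hab
    obtain ⟨haR, haI⟩ := mem_sdiff.1 (hT ha)
    have hap := (mem_insert.1 (h.closed b hbI a haR hab.symm)).resolve_right haI
    exact hpT (hap ▸ ha)
  exact hpT (hTR ▸ h.attach)

lemma IsPiece.linkedIn_trans (h : IsPiece G R v I p) (hR : ConnSet G R) (hv : v ∈ R)
    (hu : LinkedIn G (insert p I) u p k) : LinkedIn G R u v k := by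
  have hroot := (h.connSet_sdiff hR).linkedIn (mem_sdiff.2 ⟨h.attach, h.attach_notMem⟩)
    (mem_sdiff.2 ⟨hv, h.root⟩)
  refine (hu.trans hroot fun x hx => ?_).mono
    (union_subset (insert_subset h.attach h.subset) sdiff_subset) le_rfl
  obtain ⟨hx, hx'⟩ := mem_inter.1 hx
  exact mem_singleton.2 ((mem_insert.1 hx).resolve_right (mem_sdiff.1 hx').2)

/- A part of the rest not containing `p` would be a smaller piece, attached at `u`. -/
lemma IsMinPiece.connSet_erase (h : IsMinPiece G R v I p) (hu : u ∈ I) :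
    ConnSet G ((insert p I).erase u) := by
  have hpu : p ≠ u := fun e => h.attach_notMem (e ▸ hu)
  refine connSet_of_forall_closed_mem (mem_erase.2 ⟨hpu, mem_insert_self p I⟩) ?_
  intro T hT hne hcl
  by_contra hpT
  have hTI : T ⊆ I := (subset_insert_iff_of_notMem hpT).1 (hT.trans (erase_subset _ _))
  have huT : u ∉ T := fun e => notMem_erase u _ (hT e)
  have hpiece : IsPiece G R v T u := by
    refine ⟨hne, hTI.trans h.subset, fun e => h.root (hTI e), h.subset hu, huT, ?_⟩
    intro a ha b hb hab
    by_cases hbu : b = u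
    · exact mem_insert.2 (Or.inl hbu)
    · have hb' := h.closed a (hTI ha) b hb hab
      exact mem_insert_of_mem (hcl a ha b (mem_erase.2 ⟨hbu, hb'⟩) hab)
  exact absurd (h.min T u hpiece) (not_le.2 (card_lt_card ⟨hTI, fun hIT => huT (hIT hu)⟩))

lemma IsPiece.linkedIn_of_singleton (h : IsPiece G R v {u} p) (hR : ConnSet G R)
    (hk : k ≤ degIn G R u) : LinkedIn G {p, u} u p k := by
  have huR : u ∈ R := h.subset (mem_singleton_self u)
  have hpu : u ≠ p := fun e => h.attach_notMem (mem_singleton.2 e.symm)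
  have hN : R.filter (G.Adj u) ⊆ {p} := fun b hb => by
    obtain ⟨hb, hub⟩ := mem_filter.1 hb
    have hbpu := h.closed u (mem_singleton_self u) b hb hub
    rw [mem_insert, mem_singleton] at hbpu
    exact mem_singleton.2 (hbpu.resolve_right hub.ne')
  have hpos := hR.degIn_pos huR fun e => hpu (mem_singleton.1 (e ▸ h.attach)).symm
  have hNp : R.filter (G.Adj u) = {p} :=
    (subset_singleton_iff.1 hN).resolve_left (card_pos.1 hpos).ne_empty
  have hup : G.Adj u p := (mem_filter.1 (hNp ▸ mem_singleton_self p)).2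
  rw [degIn, hNp, card_singleton] at hk
  refine (LinkedIn.cons (.refl (mem_singleton_self p)) (notMem_singleton.2 hpu) hup).mono ?_ hk
  rw [pair_comm]

/- Otherwise `J` would be a smaller piece of `R`. -/
lemma IsMinPiece.exists_adj (h : IsMinPiece G R v I p) (hu : u ∈ I)
    (hJ : IsPiece G ((insert p I).erase u) p J q) : ∃ x ∈ J, G.Adj u x := by
  by_contra! hno
  have hsub : (insert p I).erase u ⊆ insert p I := erase_subset _ _
  have hJI : J ⊆ I := (subset_insert_iff_of_notMem hJ.root).1 (hJ.subset.trans hsub)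
  have huJ : u ∉ J := fun e => notMem_erase u _ (hJ.subset e)
  have hpiece : IsPiece G R v J q := by
    refine ⟨hJ.nonempty, hJI.trans h.subset, fun e => h.root (hJI e),
      insert_subset h.attach h.subset (hsub hJ.attach), hJ.attach_notMem, ?_⟩
    intro a ha b hb hab
    have hbu : b ≠ u := fun e => hno a ha (e ▸ hab.symm)
    exact hJ.closed a ha b (mem_erase.2 ⟨hbu, h.closed a (hJI ha) b hb hab⟩) hab
  exact absurd (h.min J q hpiece) (not_le.2 (card_lt_card ⟨hJI, fun hIJ => huJ (hIJ hu)⟩))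

lemma IsPiece.degIn_le (h : IsPiece G R v I p) (hw : w ∈ I) :
    degIn G R w ≤ degIn G (insert p I) w := by
  refine card_le_card fun b hb => ?_
  obtain ⟨hb, hwb⟩ := mem_filter.1 hb
  exact mem_filter.2 ⟨h.closed w hw b hb hwb, hwb⟩

lemma degIn_le_degIn_erase_add_one (G : SimpleGraph V) (R : Finset V) (u w : V) :
    degIn G R w ≤ degIn G (R.erase u) w + 1 := by
  have := pred_card_le_card_erase (s := R.filter (G.Adj w)) (a := u)
  rw [degIn, degIn, filter_erase]
  omega

/- Delete `u`; a minimal piece of the rest contains a neighbour of `u`, all its degrees have dropped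
by at most one, and induction applies to it. -/
lemma IsMinPiece.linkedIn_attach (hR : ConnSet G R) (h : IsMinPiece G R v I p)
    (hk : ∀ w ∈ I, k ≤ degIn G R w) (hu : u ∈ I) : LinkedIn G (insert p I) u p k := by
  induction hm : #I using Nat.strong_induction_on generalizing R I v p u k with
  | _ m ih =>
    subst hm
    by_cases hsing : I = {u}
    · subst hsing
      exact h.linkedIn_of_singleton hR (hk u hu)
    have huR' : u ∉ (insert p I).erase u := notMem_erase u _
    have hpu : p ≠ u := fun e => h.attach_notMem (e ▸ hu)
    have hpR' : p ∈ (insert p I).erase u := mem_erase.2 ⟨hpu, mem_insert_self p I⟩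
    have hne : (insert p I).erase u ≠ {p} := fun hp => by
      obtain ⟨x, hx, hxu⟩ := exists_mem_ne (one_lt_card_iff_nontrivial.2
        ((nontrivial_iff_ne_singleton hu).2 hsing)) u
      have hxp : x ∈ ({p} : Finset V) := hp ▸ mem_erase.2 ⟨hxu, mem_insert_of_mem hx⟩
      exact h.attach_notMem (mem_singleton.1 hxp ▸ hx)
    obtain ⟨J, q, hJ⟩ := exists_isMinPiece (G := G) hpR' hne
    have hJI : J ⊆ I :=
      (subset_insert_iff_of_notMem hJ.root).1 (hJ.subset.trans (erase_subset _ _))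
    have huJ : u ∉ J := fun e => huR' (hJ.subset e)
    obtain ⟨x, hx, hux⟩ := h.exists_adj hu hJ.toIsPiece
    have hdeg : ∀ w ∈ J, k - 1 ≤ degIn G ((insert p I).erase u) w := fun w hw => by
      have := hk w (hJI hw)
      have := h.degIn_le (hJI hw)
      have := degIn_le_degIn_erase_add_one G (insert p I) u w
      omega
    have hconn := h.connSet_erase hu
    have hxq := ih #J (card_lt_card ⟨hJI, fun hIJ => huJ (hIJ hu)⟩) hconn hJ hdeg hx rfl
    refine ((hJ.linkedIn_trans hconn hpR' hxq).cons huR' hux).mono ?_ (by omega)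
    rw [insert_erase (mem_insert_of_mem hu)]

lemma IsMinPiece.linkedIn (hR : ConnSet G R) (hv : v ∈ R) (h : IsMinPiece G R v I p)
    (hk : ∀ w ∈ I, k ≤ degIn G R w) (hu : u ∈ I) : LinkedIn G R u v k :=
  h.linkedIn_trans hR hv (h.linkedIn_attach hR hk hu)

end Pieces

section Attachments

variable {G : SimpleGraph V} {n : ℕ} [NeZero n] {c : ZMod n → V} {H J K : Finset V}

lemma weighted_gap_le {U A B : Finset (ZMod n)} {x y : ℕ} (hA : A ⊆ U) (hB : B ⊆ U)
    (hAB : Disjoint A B) (h2 : ∀ i ∈ U, 2 ≤ gap U i) (hx : ∀ i ∈ A, x + 2 ≤ gap U i)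
    (hy : ∀ i ∈ B, y + 2 ≤ gap U i) : 2 * #U + x * #A + y * #B ≤ n := by
  calc 2 * #U + x * #A + y * #B
      = ∑ i ∈ U, (2 + (if i ∈ A then x else 0) + if i ∈ B then y else 0) := by
        simp only [sum_add_distrib, sum_ite_mem, inter_eq_right.2 hA, inter_eq_right.2 hB,
          sum_const, smul_eq_mul, mul_comm]
    _ ≤ n := sum_le_of_le_gap _ fun i hi => ?_
  by_cases hiA : i ∈ A
  · have := hx i hiA
    simp only [hiA, Finset.disjoint_left.1 hAB hiA, if_true, if_false]
    omega
  · by_cases hiB : i ∈ B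
    · have := hy i hiB
      simp only [hiA, hiB, if_true, if_false]
      omega
    · simpa [hiA, hiB] using h2 i hi

/-- The positions on the cycle `c` adjacent to some vertex of `J`. -/
noncomputable def att (G : SimpleGraph V) (c : ZMod n → V) (J : Finset V) : Finset (ZMod n) :=
  univ.filter fun i => ∃ h ∈ J, G.Adj (c i) h

lemma mem_att {i : ZMod n} : i ∈ att G c J ↔ ∃ h ∈ J, G.Adj (c i) h := by
  simp only [att, mem_filter, mem_univ, true_and]

lemma att_mono (h : J ⊆ K) : att G c J ⊆ att G c K := fun i hi => by
  obtain ⟨x, hx, hix⟩ := mem_att.1 hi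
  exact mem_att.2 ⟨x, h hx, hix⟩

lemma att_union (J K : Finset V) : att G c (J ∪ K) = att G c J ∪ att G c K := by
  ext i
  simp only [mem_att, mem_union, or_and_right, exists_or]

/-- `H` is a component of the graph obtained by deleting the cycle `c`. -/
structure IsComp (G : SimpleGraph V) (c : ZMod n → V) (H : Finset V) : Prop where
  conn : ConnSet G H
  off : ∀ k, c k ∉ H
  closed : ∀ a ∈ H, ∀ b, G.Adj a b → b ∈ H ∨ ∃ k, c k = b

lemma IsComp.two_le_gap (hc : IsMaxCycle G c) (hH : IsComp G c H) {U : Finset (ZMod n)}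
    (hU : U ⊆ att G c H) (h2 : 2 ≤ #U) (i : ZMod n) (hi : i ∈ U) : 2 ≤ gap U i := by
  have hne : U.Nonempty := ⟨i, hi⟩
  obtain ⟨u, hu, hiu⟩ := mem_att.1 (hU hi)
  obtain ⟨v, hv, hiv⟩ := mem_att.1 (hU (next_mem hne i))
  have := hc.add_two_le_of_detour hH.off (one_le_gap hne i) (gap_lt h2 i)
    (hH.conn.linkedIn hu hv) hiu hiv
  omega

lemma IsComp.add_two_le_gap_of_mem_crossing (hc : IsMaxCycle G c) (hH : IsComp G c H) {m : ℕ}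
    (hlink : ∀ u ∈ J, ∀ v ∈ K, LinkedIn G H u v m) (h2 : 2 ≤ #(att G c J ∪ att G c K))
    (i : ZMod n) (hi : i ∈ crossing (att G c J) (att G c K)) :
    m + 2 ≤ gap (att G c J ∪ att G c K) i := by
  obtain ⟨hiU, hi⟩ := mem_filter.1 hi
  have hg := one_le_gap ⟨i, hiU⟩ i
  rcases hi with ⟨hu, hv⟩ | ⟨hv, hu⟩ <;>
  obtain ⟨u, hu, hiu⟩ := mem_att.1 hu <;>
  obtain ⟨v, hv, hiv⟩ := mem_att.1 hv
  · exact hc.add_two_le_of_detour hH.off hg (gap_lt h2 i) (hlink u hu v hv) hiu hiv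
  · exact hc.add_two_le_of_detour hH.off hg (gap_lt h2 i) (hlink u hu v hv).symm hiv hiu

lemma IsComp.two_mul_card_att_add_le (hc : IsMaxCycle G c) (hH : IsComp G c H) {m : ℕ}
    (hJ : J ⊆ H) (hK : K ⊆ H) (hlink : ∀ u ∈ J, ∀ v ∈ K, LinkedIn G H u v m)
    (h2 : 2 ≤ #(att G c J ∪ att G c K)) :
    2 * #(att G c J ∪ att G c K) + m * #(crossing (att G c J) (att G c K)) ≤ n := by
  simpa using weighted_gap_le (A := crossing (att G c J) (att G c K)) (B := ∅) (y := 0)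
    (filter_subset _ _) (empty_subset _) (disjoint_empty_right _)
    (hH.two_le_gap hc (union_subset (att_mono hJ) (att_mono hK)) h2)
    (hH.add_two_le_gap_of_mem_crossing hc hlink h2) (by simp)

variable [Fintype V]

lemma IsComp.degree_le (hH : IsComp G c H) {w : V} (hw : w ∈ H) (hwJ : w ∈ J) :
    G.degree w ≤ degIn G H w + #(att G c J) := by
  have hsub : G.neighborFinset w ⊆ H.filter (G.Adj w) ∪ (att G c J).image c := by
    intro b hb
    rw [mem_neighborFinset] at hb
    rw [mem_union, mem_filter, mem_image]
    rcases hH.closed w hw b hb with h | ⟨k, rfl⟩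
    · exact Or.inl ⟨h, hb⟩
    · exact Or.inr ⟨k, mem_att.2 ⟨w, hwJ, hb.symm⟩, rfl⟩
  calc G.degree w ≤ #(H.filter (G.Adj w) ∪ (att G c J).image c) := card_le_card hsub
    _ ≤ _ := card_union_le _ _
    _ ≤ _ := Nat.add_le_add_left card_image_le _

/- `E` and the attachments of `J` separate `J` from `x`. -/
lemma IsComp.le_card_att (hH : IsComp G c H) {k : ℕ} (hk : KConnected G k) {E : Finset V}
    (hJ : J.Nonempty) (hJH : J ⊆ H) (hJE : Disjoint J E)
    (hcl : ∀ a ∈ J, ∀ b ∈ H, G.Adj a b → b ∈ J ∪ E) {x : V} (hxJ : x ∉ J) (hxE : x ∉ E)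
    (hx : ∀ i ∈ att G c J, c i ≠ x) : k ≤ #E + #(att G c J) := by
  by_contra! hlt
  have hdisj : Disjoint J (E ∪ (att G c J).image c) := by
    refine disjoint_union_right.2 ⟨hJE, Finset.disjoint_left.2 fun a ha ha' => ?_⟩
    obtain ⟨i, -, rfl⟩ := mem_image.1 ha'
    exact hH.off i (hJH ha)
  have hclosed : ∀ a ∈ J, ∀ b, G.Adj a b → b ∈ J ∪ (E ∪ (att G c J).image c) := by
    intro a ha b hab
    rw [← union_assoc]
    rcases hH.closed a (hJH ha) b hab with hb | ⟨i, rfl⟩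
    · exact mem_union_left _ (hcl a ha b hb hab)
    · exact mem_union_right _ (mem_image_of_mem c (mem_att.2 ⟨a, ha, hab.symm⟩))
  have hcard : #(E ∪ (att G c J).image c) < k :=
    ((card_union_le _ _).trans (Nat.add_le_add_left card_image_le _)).trans_lt hlt
  have hx' : x ∈ J ∪ (E ∪ (att G c J).image c) := by
    rw [union_eq_univ_of_kConnected hk hJ hdisj hclosed hcard]
    exact mem_univ x
  simp only [mem_union, mem_image, hxJ, hxE, false_or] at hx'
  obtain ⟨i, hi, hix⟩ := hx'
  exact hx i hi hix

lemma IsComp.le_card_att_self (hc : IsMaxCycle G c) (hH : IsComp G c H) {k : ℕ}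
    (hk : KConnected G k) : k ≤ #(att G c H) := by
  have h3 := hc.three_le
  obtain ⟨x, hx⟩ : ∃ x, x ∉ att G c H := by
    by_contra! hall
    obtain ⟨u, hu, h0u⟩ := mem_att.1 (hall 0)
    obtain ⟨v, hv, h1v⟩ := mem_att.1 (hall (0 + (1 : ℕ)))
    have := hc.add_two_le_of_detour hH.off le_rfl (by omega) (hH.conn.linkedIn hu hv) h0u h1v
    omega
  simpa using hH.le_card_att hk (E := ∅) hH.conn.nonempty subset_rfl (disjoint_empty_right H)
    (by simp +contextual) (hH.off x) (notMem_empty _) fun i hi h => hx (hc.injective h ▸ hi)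

end Attachments

section CutVertex

variable {G : SimpleGraph V} {H I J : Finset V} {p r v : V}

lemma IsPiece.connSet_insert (hJ : IsPiece G H r J v) (hH : ConnSet G H) :
    ConnSet G (insert v J) := by
  refine connSet_of_forall_closed_mem (mem_insert_self v J) fun T hT hne hcl => ?_
  by_contra hvT
  have hTJ : T ⊆ J := (subset_insert_iff_of_notMem hvT).1 hT
  have hTH : T = H := hH.eq_of_closed (hTJ.trans hJ.subset) hne fun a ha b hb hab =>
    hcl a ha b (hJ.closed a (hTJ ha) b hb hab) hab
  exact hvT (hTH ▸ hJ.attach)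

lemma IsPiece.trans (hJ : IsPiece G H r J v) (hI : IsPiece G (insert v J) v I p) :
    IsPiece G H r I p := by
  have hIJ : I ⊆ J := (subset_insert_iff_of_notMem hI.root).1 hI.subset
  exact ⟨hI.nonempty, hIJ.trans hJ.subset, fun hr => hJ.root (hIJ hr),
    insert_subset hJ.attach hJ.subset hI.attach, hI.attach_notMem,
    fun a ha b hb hab => hI.closed a ha b (hJ.closed a (hIJ ha) b hb hab) hab⟩

lemma IsPiece.exists_linkedIn (hJ : IsPiece G H r J v) (hH : ConnSet G H) :
    ∃ I p w, IsPiece G H r I p ∧ p ∈ insert v J ∧ w ∈ I ∧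
      ∀ u ∈ I, LinkedIn G (insert v J) u v (degIn G H w) := by
  have hv := mem_insert_self v J
  have hne : insert v J ≠ {v} := fun h => by
    obtain ⟨x, hx⟩ := hJ.nonempty
    have hxv : x ∈ ({v} : Finset V) := h ▸ mem_insert_of_mem hx
    exact hJ.attach_notMem (mem_singleton.1 hxv ▸ hx)
  obtain ⟨I, p, hI⟩ := exists_isMinPiece (G := G) hv hne
  have hIJ : I ⊆ J := (subset_insert_iff_of_notMem hI.root).1 hI.subset
  obtain ⟨w, hw, hmin⟩ := exists_min_image I (degIn G H) hI.nonempty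
  exact ⟨I, p, w, hJ.trans hI.toIsPiece, hI.attach, hw, fun u hu =>
    hI.linkedIn (hJ.connSet_insert hH) hv
      (fun x hx => (hmin x hx).trans (hJ.degIn_le (hIJ hx))) hu⟩

lemma exists_isPiece_of_not_connSet_erase (hv : v ∈ H) (hne : (H.erase v).Nonempty)
    (hcut : ¬ ConnSet G (H.erase v)) : ∃ r ∈ H.erase v, ∃ r' ∈ H.erase v, ∃ J J',
      Disjoint J J' ∧ IsPiece G H r J v ∧ IsPiece G H r' J' v := by
  obtain ⟨r, hr⟩ := hne
  obtain ⟨J, hJ, ⟨r', hr'⟩, hcl, hrJ⟩ : ∃ J ⊆ H.erase v, J.Nonempty ∧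
      (∀ a ∈ J, ∀ b ∈ H.erase v, G.Adj a b → b ∈ J) ∧ r ∉ J := by
    by_contra! h
    exact hcut (connSet_of_forall_closed_mem hr h)
  refine ⟨r, hr, r', hJ hr', J, H.erase v \ J, disjoint_sdiff,
    ⟨⟨r', hr'⟩, hJ.trans (erase_subset v H), hrJ, hv, fun h => notMem_erase v H (hJ h), ?_⟩,
    ⟨⟨r, mem_sdiff.2 ⟨hr, hrJ⟩⟩, sdiff_subset.trans (erase_subset v H),
      fun h => (mem_sdiff.1 h).2 hr', hv, fun h => notMem_erase v H (sdiff_subset h), ?_⟩⟩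
  all_goals
    intro a ha b hb hab
    by_cases hbv : b = v
    · exact mem_insert.2 (Or.inl hbv)
    refine mem_insert_of_mem ?_
    have hb' : b ∈ H.erase v := mem_erase.2 ⟨hbv, hb⟩
  · exact hcl a ha b hb' hab
  · obtain ⟨ha, haJ⟩ := mem_sdiff.1 ha
    exact mem_sdiff.2 ⟨hb', fun hbJ => haJ (hcl b hbJ a ha hab.symm)⟩

/- Combine `(D + D' - 2) * (a - 2) ≥ 0` with `s ≤ a`. -/
lemma add_mul_count {D D' a s : ℕ} (hD : 1 ≤ D) (hD' : 1 ≤ D') (ha : 2 ≤ a) (hs : s ≤ a) :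
    2 * D + 2 * D' + 2 * s ≤ (D + D') * a + 8 := by
  nlinarith

variable {n : ℕ} [NeZero n] {c : ZMod n → V} [Fintype V] {k δ : ℕ}

lemma IsComp.le_card_att_add_one (hH : IsComp G c H) (hk : KConnected G k)
    (hI : IsPiece G H r I p) (hr : r ∈ H) (hrp : r ≠ p) : k ≤ #(att G c I) + 1 := by
  rw [add_comm, ← card_singleton p]
  refine hH.le_card_att hk hI.nonempty hI.subset (disjoint_singleton_right.2 hI.attach_notMem) ?_
    hI.root (notMem_singleton.2 hrp) fun i _ hi => hH.off i (hi ▸ hr)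
  intro a ha b hb hab
  rw [union_comm, ← insert_eq]
  exact hI.closed a ha b hb hab

lemma IsComp.bound_of_cut_vertex (hc : IsMaxCycle G c) (hH : IsComp G c H)
    (h4 : KConnected G 4) (hδ : ∀ v, δ ≤ G.degree v) (hv : v ∈ H) (hcard : 2 ≤ #H)
    (hcut : ¬ ConnSet G (H.erase v)) : 4 * δ ≤ n + 8 := by
  obtain ⟨r, hr, r', hr', J, J', hJJ', hJ, hJ'⟩ := exists_isPiece_of_not_connSet_erase hv
    (by rw [← card_pos, card_erase_of_mem hv]; omega) hcut
  rw [mem_erase] at hr hr'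
  obtain ⟨I, p, w, hI, hp, hw, hlink⟩ := hJ.exists_linkedIn hH.conn
  obtain ⟨I', p', w', hI', hp', hw', hlink'⟩ := hJ'.exists_linkedIn hH.conn
  have hpos : ∀ {r I p w}, IsPiece G H r I p → w ∈ I → 1 ≤ degIn G H w := fun hI hw =>
    hH.conn.degIn_pos (hI.subset hw) fun hHw => hI.attach_notMem
      (mem_singleton.1 (hHw ▸ hI.attach) ▸ hw)
  have hcross : ∀ x ∈ I, ∀ y ∈ I', LinkedIn G H x y (degIn G H w + degIn G H w') := by
    intro x hx y hy
    refine ((hlink x hx).trans (hlink' y hy).symm ?_).mono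
      (union_subset (insert_subset hv hJ.subset) (insert_subset hv hJ'.subset)) le_rfl
    rw [← insert_inter_distrib, disjoint_iff_inter_eq_empty.1 hJJ', insert_empty_eq]
  have hrp : ∀ {r J p}, IsPiece G H r J v → r ≠ v → p ∈ insert v J → r ≠ p := by
    rintro r J _ hJ hrv hp rfl
    exact hJ.root ((mem_insert.1 hp).resolve_left hrv)
  have hZ := hH.le_card_att_add_one h4 hI hr.2 (hrp hJ hr.1 hp)
  have hZ' := hH.le_card_att_add_one h4 hI' hr'.2 (hrp hJ' hr'.1 hp')
  have hd := (hδ w).trans (hH.degree_le (hI.subset hw) hw)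
  have hd' := (hδ w').trans (hH.degree_le (hI'.subset hw') hw')
  have hie := card_union_add_card_inter (att G c I) (att G c I')
  have hU := card_le_card (subset_union_left (s₁ := att G c I) (s₂ := att G c I'))
  have hcount := hH.two_mul_card_att_add_le hc hI.subset hI'.subset hcross (by omega)
  have hX := two_le_card_crossing (Z := att G c I) (Z' := att G c I') (by omega)
    (card_pos.1 (by omega))
  have harith := add_mul_count (hpos hI hw) (hpos hI' hw') hX
    (card_le_card (inter_subset_crossing _ _))
  omega

end CutVertex

section TwoConnectedComponent

variable {G : SimpleGraph V} {H : Finset V} {h r u w x : V} {k : ℕ}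

lemma linkedIn_of_two_connected (hH : ConnSet G H) (h2 : ∀ v ∈ H, ConnSet G (H.erase v))
    (hr : r ∈ H) (hu : u ∈ H) (hur : u ≠ r) (hk : ∀ w ∈ H.erase r, k ≤ degIn G H w) :
    LinkedIn G H u r k := by
  obtain ⟨I, p, hI⟩ := exists_isMinPiece (G := G) hr fun hHr => hur (mem_singleton.1 (hHr ▸ hu))
  have hIp : I = H.erase p := by
    refine (h2 p hI.attach).eq_of_closed (subset_erase.2 ⟨hI.subset, hI.attach_notMem⟩)
      hI.nonempty fun a ha b hb hab => ?_
    obtain ⟨hbp, hb⟩ := mem_erase.1 hb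
    exact (mem_insert.1 (hI.closed a ha b hb hab)).resolve_left hbp
  obtain rfl : r = p := by
    by_contra hrp
    exact hI.root (hIp ▸ mem_erase.2 ⟨hrp, hr⟩)
  subst hIp
  exact hI.linkedIn hH hr hk (mem_erase.2 ⟨hur, hu⟩)

lemma two_le_degIn (hH : ConnSet G H) (h2 : ∀ v ∈ H, ConnSet G (H.erase v)) (h3 : 3 ≤ #H)
    (hw : w ∈ H) : 2 ≤ degIn G H w := by
  have hpos := hH.degIn_pos hw fun hHw => by
    rw [hHw, card_singleton] at h3
    omega
  obtain ⟨y, hy⟩ := card_pos.1 hpos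
  obtain ⟨hyH, hwy⟩ := mem_filter.1 hy
  have hpos' := (h2 y hyH).degIn_pos (mem_erase.2 ⟨hwy.ne, hw⟩) fun hHw => by
    have := card_erase_of_mem hyH
    rw [hHw, card_singleton] at this
    omega
  rw [degIn, filter_erase, card_erase_of_mem hy] at hpos'
  rw [degIn]
  omega

lemma degIn_lt_card (hw : w ∈ H) : degIn G H w < #H :=
  card_lt_card (filter_ssubset.2 ⟨w, hw, G.irrefl⟩)

variable {n : ℕ} [NeZero n] {c : ZMod n → V} {i j : ZMod n}

/-- The starts of those segments between consecutive attachments of `H` whose two ends have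
distinct neighbours in `H`. -/
noncomputable def longStarts (G : SimpleGraph V) (c : ZMod n → V) (H : Finset V) :
    Finset (ZMod n) :=
  (att G c H).filter fun i => ∃ h ∈ H, ∃ h' ∈ H, h ≠ h' ∧ G.Adj (c i) h ∧
    G.Adj (c (next (att G c H) i)) h'

lemma IsComp.add_two_le_gap_of_mem_longStarts (hc : IsMaxCycle G c) (hH : IsComp G c H)
    (hlink : ∀ u ∈ H, ∀ v ∈ H, u ≠ v → LinkedIn G H u v k) (h2 : 2 ≤ #(att G c H))
    (hi : i ∈ longStarts G c H) : k + 2 ≤ gap (att G c H) i := by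
  obtain ⟨hiW, u, hu, v, hv, huv, hiu, hiv⟩ := mem_filter.1 hi
  exact hc.add_two_le_of_detour hH.off (one_le_gap ⟨i, hiW⟩ i) (gap_lt h2 i)
    (hlink u hu v hv huv) hiu hiv

lemma crossing_subset_longStarts (hx : x ∈ H) :
    crossing (att G c {x}) (att G c (H.erase x)) ⊆ longStarts G c H := by
  intro i hi
  obtain ⟨hiW, hi⟩ := mem_filter.1 hi
  rw [← att_union, ← insert_eq, insert_erase hx] at hiW hi
  refine mem_filter.2 ⟨hiW, ?_⟩
  simp only [mem_att] at hi
  rcases hi with ⟨⟨u, hu, hiu⟩, v, hv, hiv⟩ | ⟨⟨u, hu, hiu⟩, v, hv, hiv⟩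
  · obtain rfl := mem_singleton.1 hu
    exact ⟨u, hx, v, mem_of_mem_erase hv, (ne_of_mem_erase hv).symm, hiu, hiv⟩
  · obtain rfl := mem_singleton.1 hv
    exact ⟨u, mem_of_mem_erase hu, v, hx, ne_of_mem_erase hu, hiu, hiv⟩

lemma IsComp.two_mul_card_att_add_add_le {D D' : ℕ} (hc : IsMaxCycle G c) (hH : IsComp G c H)
    (hx : x ∈ H) (h2 : 2 ≤ #(att G c H)) (hlinkx : ∀ v ∈ H.erase x, LinkedIn G H x v D')
    (hlink : ∀ u ∈ H, ∀ v ∈ H, u ≠ v → LinkedIn G H u v D) :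
    2 * #(att G c H) + D' * #(crossing (att G c {x}) (att G c (H.erase x))) +
      D * #(longStarts G c H \ crossing (att G c {x}) (att G c (H.erase x))) ≤ n := by
  have hW : att G c {x} ∪ att G c (H.erase x) = att G c H := by
    rw [← att_union, ← insert_eq, insert_erase hx]
  have hcross := hH.add_two_le_gap_of_mem_crossing hc (J := {x}) (K := H.erase x) (m := D')
    (fun u hu => by rwa [mem_singleton.1 hu]) (by rwa [hW])
  rw [hW] at hcross
  exact weighted_gap_le ((crossing_subset_longStarts hx).trans (filter_subset _ _))
    (sdiff_subset.trans (filter_subset _ _)) disjoint_sdiff (hH.two_le_gap hc subset_rfl h2)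
    hcross fun i hi => hH.add_two_le_gap_of_mem_longStarts hc hlink h2 (sdiff_subset hi)

lemma mem_longStarts_of_two_le_degIn (hi : 2 ≤ degIn G H (c i)) : i ∈ longStarts G c H := by
  obtain ⟨a, ha, b, hb, hab⟩ := one_lt_card.1 hi
  obtain ⟨haH, hia⟩ := mem_filter.1 ha
  obtain ⟨hbH, hib⟩ := mem_filter.1 hb
  have hiW : i ∈ att G c H := mem_att.2 ⟨a, haH, hia⟩
  obtain ⟨x, hx, hix⟩ := mem_att.1 (next_mem ⟨i, hiW⟩ i)
  by_cases hax : a = x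
  · exact mem_filter.2 ⟨hiW, b, hbH, x, hx, hax ▸ hab.symm, hib, hix⟩
  · exact mem_filter.2 ⟨hiW, a, haH, x, hx, hax, hia, hix⟩

lemma filter_adj_next_eq_singleton (hi : i ∉ longStarts G c H)
    (hh : H.filter (G.Adj (c i)) = {h}) :
    H.filter (G.Adj (c (next (att G c H) i))) = {h} := by
  obtain ⟨hhH, hih⟩ := mem_filter.1 (hh ▸ mem_singleton_self h)
  have hiW : i ∈ att G c H := mem_att.2 ⟨h, hhH, hih⟩
  obtain ⟨x, hx, hix⟩ := mem_att.1 (next_mem ⟨i, hiW⟩ i)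
  refine eq_singleton_iff_nonempty_unique_mem.2 ⟨⟨x, mem_filter.2 ⟨hx, hix⟩⟩, fun y hy => ?_⟩
  obtain ⟨hy, hiy⟩ := mem_filter.1 hy
  by_contra hyh
  exact hi (mem_filter.2 ⟨hiW, h, hhH, y, hy, Ne.symm hyh, hih, hiy⟩)

variable [Fintype V]

lemma IsComp.att_erase_nonempty (hH : IsComp G c H) (hk : KConnected G k) (h2 : 2 ≤ k)
    (hh : h ∈ H) (hne : (H.erase h).Nonempty) : (att G c (H.erase h)).Nonempty := by
  by_contra hemp
  rw [not_nonempty_iff_eq_empty] at hemp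
  have hsep := hH.le_card_att hk (E := {h}) (x := c 0) hne (erase_subset _ _)
    (disjoint_singleton_right.2 (notMem_erase h H))
    (fun _ _ b hb _ => by rwa [union_comm, ← insert_eq, insert_erase hh])
    (fun h0 => hH.off 0 (mem_of_mem_erase h0)) (fun h0 => hH.off 0 (mem_singleton.1 h0 ▸ hh))
    (by simp [hemp])
  rw [hemp, card_singleton, card_empty] at hsep
  omega

/- Otherwise `h` is the only neighbour in `H` of every attachment, going round the cycle. -/
lemma IsComp.exists_mem_longStarts (hH : IsComp G c H) (hk : KConnected G k) (h2 : 2 ≤ k)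
    (hne : (H.erase h).Nonempty) (hj : H.filter (G.Adj (c j)) = {h}) :
    ∃ i ∈ longStarts G c H, H.filter (G.Adj (c i)) = {h} := by
  by_contra! hno
  obtain ⟨hh, hjh⟩ := mem_filter.1 (hj ▸ mem_singleton_self h)
  have hjW : j ∈ att G c H := mem_att.2 ⟨h, hh, hjh⟩
  have hall : (att G c H).filter (fun i => H.filter (G.Adj (c i)) = {h}) = att G c H := by
    refine eq_of_next_closed (filter_subset _ _) ⟨j, mem_filter.2 ⟨hjW, hj⟩⟩ fun i hi => ?_
    obtain ⟨-, hih⟩ := mem_filter.1 hi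
    exact mem_filter.2 ⟨next_mem ⟨j, hjW⟩ i,
      filter_adj_next_eq_singleton (fun hi => hno i hi hih) hih⟩
  obtain ⟨i, hi⟩ := hH.att_erase_nonempty hk h2 hh hne
  obtain ⟨x, hx, hix⟩ := mem_att.1 hi
  obtain ⟨hxh, hxH⟩ := mem_erase.1 hx
  have hih := (mem_filter.1 (hall ▸ att_mono (erase_subset h H) hi)).2
  exact hxh (mem_singleton.1 (hih ▸ mem_filter.2 ⟨hxH, hix⟩))

/- `F` consists, for each long start, of its neighbour in `H` if that is unique and of the start
itself otherwise. -/
lemma IsComp.exists_separator_card_le_card_longStarts (hH : IsComp G c H) (hk : KConnected G k)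
    (h2 : 2 ≤ k) (hcard : 2 ≤ #H) : ∃ F : Finset V, #F ≤ #(longStarts G c H) ∧
      ∀ a ∈ H \ F, ∀ j, G.Adj (c j) a → c j ∈ F := by
  have hsel : ∀ i, ∃ x, (∀ h, H.filter (G.Adj (c i)) = {h} → x = h) ∧
      (2 ≤ degIn G H (c i) → x = c i) := fun i => by
    by_cases hi : ∃ h, H.filter (G.Adj (c i)) = {h}
    · obtain ⟨h, hh⟩ := hi
      refine ⟨h, fun h' hh' => singleton_injective (hh.symm.trans hh'), fun hi => ?_⟩
      rw [degIn, hh, card_singleton] at hi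
      omega
    · exact ⟨c i, fun h hh => absurd ⟨h, hh⟩ hi, fun _ => rfl⟩
  choose φ hφ hφ' using hsel
  refine ⟨(longStarts G c H).image φ, card_image_le, fun a ha j hja => ?_⟩
  obtain ⟨haH, haF⟩ := mem_sdiff.1 ha
  have hmem : a ∈ H.filter (G.Adj (c j)) := mem_filter.2 ⟨haH, hja⟩
  by_cases hj : 2 ≤ degIn G H (c j)
  · exact hφ' j hj ▸ mem_image_of_mem φ (mem_longStarts_of_two_le_degIn hj)
  · have hja' : H.filter (G.Adj (c j)) = {a} := by
      obtain ⟨b, hb⟩ : ∃ b, H.filter (G.Adj (c j)) = {b} := by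
        rw [← card_eq_one]
        have := card_pos.2 ⟨a, hmem⟩
        rw [degIn] at hj
        omega
      have hab : a ∈ ({b} : Finset V) := hb ▸ hmem
      rw [hb, mem_singleton.1 hab]
    have hne : (H.erase a).Nonempty := by
      rw [← card_pos, card_erase_of_mem haH]
      omega
    obtain ⟨i, hi, hia⟩ := hH.exists_mem_longStarts hk h2 hne hja'
    exact absurd (hφ i a hia ▸ mem_image_of_mem φ hi) haF

lemma IsComp.le_card_longStarts (hc : IsMaxCycle G c) (hH : IsComp G c H) (hk : KConnected G k)
    (h2 : 2 ≤ k) (hcard : k ≤ #H) : k ≤ #(longStarts G c H) := by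
  by_contra! hlt
  obtain ⟨F, hFle, hsep⟩ := hH.exists_separator_card_le_card_longStarts hk h2 (h2.trans hcard)
  have hF : #F < k := hFle.trans_lt hlt
  have hP : (H \ F).Nonempty := sdiff_nonempty.2 fun hHF => by
    have := card_le_card hHF
    omega
  have huniv := union_eq_univ_of_kConnected hk hP sdiff_disjoint (fun a ha b hab => by
    rw [sdiff_union_self_eq_union, mem_union]
    rcases hH.closed a (mem_sdiff.1 ha).1 b hab with hb | ⟨j, rfl⟩
    · exact Or.inl hb
    · exact Or.inr (hsep a ha j hab.symm)) hF
  have hcF : univ.image c ⊆ F := image_subset_iff.2 fun j _ => by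
    have hj : c j ∈ H \ F ∪ F := huniv ▸ mem_univ _
    rw [sdiff_union_self_eq_union, mem_union] at hj
    exact hj.resolve_left (hH.off j)
  have hn : #(univ : Finset (ZMod n)) ≤ #F :=
    (card_image_of_injective _ hc.injective).ge.trans (card_le_card hcF)
  have := (hH.le_card_att_self hc hk).trans (card_le_card (subset_univ _))
  omega

lemma two_connected_count {D D' a b s : ℕ} (hD : 2 ≤ D) (hDD' : D ≤ D') (ha : 2 ≤ a)
    (hs : s ≤ a) (hab : 3 ≤ D' → 4 ≤ a + b) :
    2 * D + 2 * D' + 2 * s ≤ D' * a + D * b + 8 := by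
  rcases Nat.lt_or_ge D' 3 with hD' | hD'
  · obtain rfl : D = 2 := by omega
    obtain rfl : D' = 2 := by omega
    omega
  · have hab := hab hD'
    rcases Nat.lt_or_ge a 4 with ha4 | ha4
    · interval_cases a <;> nlinarith
    · nlinarith [Nat.zero_le (D * b), mul_le_mul' (hD.trans hDD') ha4]

lemma IsComp.bound_of_two_connected {δ : ℕ} (hc : IsMaxCycle G c) (hH : IsComp G c H)
    (h4 : KConnected G 4) (hδ : ∀ v, δ ≤ G.degree v) (hcard : 3 ≤ #H)
    (h2 : ∀ v ∈ H, ConnSet G (H.erase v)) : 4 * δ ≤ n + 8 := by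
  obtain ⟨x, hx, hxmin⟩ := exists_min_image H (degIn G H) hH.conn.nonempty
  obtain ⟨y, hy, hymin⟩ := exists_min_image (H.erase x) (degIn G H) (h2 x hx).nonempty
  have hyH : y ∈ H := mem_of_mem_erase hy
  have hD := two_le_degIn hH.conn h2 hcard hx
  have hDD' := hxmin y hyH
  have hd := (hδ x).trans (hH.degree_le hx (mem_singleton_self x))
  have hd' := (hδ y).trans (hH.degree_le hyH hy)
  have hW4 := hH.le_card_att_self hc h4
  have hcount := hH.two_mul_card_att_add_add_le hc hx (by omega)
    (fun v hv => (linkedIn_of_two_connected hH.conn h2 hx (mem_of_mem_erase hv)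
      (ne_of_mem_erase hv) hymin).symm)
    (fun u hu v hv huv => linkedIn_of_two_connected hH.conn h2 hv hu huv fun w hw =>
      hxmin w (mem_of_mem_erase hw))
  have hlong : 3 ≤ degIn G H y → 4 ≤ #(crossing (att G c {x}) (att G c (H.erase x))) +
      #(longStarts G c H \ crossing (att G c {x}) (att G c (H.erase x))) := by
    intro h3
    rw [add_comm, card_sdiff_add_card_eq_card (crossing_subset_longStarts hx)]
    exact hH.le_card_longStarts hc h4 (by omega) (h3.trans_lt (degIn_lt_card hyH))
  rcases Nat.lt_or_ge #(att G c {x}) 2 with hZ | hZ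
  · rcases Nat.lt_or_ge (degIn G H x) 4 with hD4 | hD4
    · have := Nat.le_of_add_right_le hcount
      omega
    · nlinarith [hlong (by omega)]
  · have hie := card_union_add_card_inter (att G c {x}) (att G c (H.erase x))
    rw [← att_union, ← insert_eq, insert_erase hx] at hie
    have := two_connected_count hD hDD'
      (two_le_card_crossing hZ (hH.att_erase_nonempty h4 (by omega) hx (h2 x hx).nonempty))
      (card_le_card (inter_subset_crossing _ _)) hlong
    omega

end TwoConnectedComponent

section OffEdge

variable {G : SimpleGraph V} {n : ℕ} {c : ZMod n → V} {x y z : V}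

/-- `v` does not lie on the cycle `c`. -/
def Off (c : ZMod n → V) (v : V) : Prop := ∀ k, c k ≠ v

/-- No path of length two of `G` avoids the cycle `c`. -/
def SparseOff (G : SimpleGraph V) (c : ZMod n → V) : Prop :=
  ∀ z a b, Off c z → Off c a → Off c b → G.Adj z a → G.Adj z b → a = b

/-- `xy` is an edge off the cycle `c`, while no path of length two is off `c`. -/
structure IsOffEdge (G : SimpleGraph V) (c : ZMod n → V) (x y : V) : Prop where
  sparse : SparseOff G c
  adj : G.Adj x y
  left : Off c x
  right : Off c y

lemma IsOffEdge.symm (h : IsOffEdge G c x y) : IsOffEdge G c y x :=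
  ⟨h.sparse, h.adj.symm, h.right, h.left⟩

lemma IsOffEdge.isComp (h : IsOffEdge G c x y) : IsComp G c {x, y} := by
  refine ⟨connSet_pair h.adj, fun k hk => ?_, fun a ha b hab => ?_⟩
  · rcases mem_insert.1 hk with hk | hk
    · exact h.left k hk
    · exact h.right k (mem_singleton.1 hk)
  · rw [or_iff_not_imp_right, not_exists]
    intro hb
    rcases mem_insert.1 ha with rfl | ha
    · exact mem_insert_of_mem (mem_singleton.2 (h.sparse a b y h.left hb h.right hab h.adj))
    · obtain rfl := mem_singleton.1 ha
      exact mem_insert.2 (Or.inl (h.sparse a b x h.right hb h.left hab h.adj.symm))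

lemma isComp_singleton (hz : Off c z) (hno : ∀ a, Off c a → ¬ G.Adj z a) : IsComp G c {z} := by
  refine ⟨connSet_singleton G z, fun k hk => hz k (mem_singleton.1 hk), fun a ha b hab => ?_⟩
  obtain rfl := mem_singleton.1 ha
  by_contra! hb
  exact hno b hb.2 hab

variable [NeZero n] {i : ZMod n}

lemma mem_att_singleton : i ∈ att G c {x} ↔ G.Adj (c i) x := by
  simp only [mem_att, mem_singleton, exists_eq_left]

lemma att_pair : att G c {x, y} = att G c {x} ∪ att G c {y} := by
  rw [insert_eq, att_union]

lemma IsComp.succ_notMem (hc : IsMaxCycle G c) {H : Finset V} (hH : IsComp G c H)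
    (hi : i ∈ att G c H) : i + 1 ∉ att G c H := by
  intro hi1
  obtain ⟨u, hu, hiu⟩ := mem_att.1 hi
  obtain ⟨v, hv, hiv⟩ := mem_att.1 hi1
  have h3 := hc.three_le
  have := hc.add_two_le_of_detour hH.off le_rfl (by omega) (hH.conn.linkedIn hu hv) hiu
    (by rwa [Nat.cast_one])
  omega

lemma IsOffEdge.succ_notMem (hc : IsMaxCycle G c) (h : IsOffEdge G c x y)
    (hi : i ∈ att G c {x} ∪ att G c {y}) : i + 1 ∉ att G c {x} ∪ att G c {y} := by
  rw [← att_pair] at hi ⊢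
  exact h.isComp.succ_notMem hc hi

lemma IsOffEdge.three_le (hc : IsMaxCycle G c) (h : IsOffEdge G c x y) {t : ℕ} (ht : 1 ≤ t)
    (htn : t < n) (hi : i ∈ att G c {x} ∩ att G c {y})
    (hit : i + (t : ZMod n) ∈ att G c {x} ∪ att G c {y}) : 3 ≤ t := by
  have hlink : LinkedIn G {x, y} x y 1 :=
    (LinkedIn.refl (mem_singleton_self y)).cons (notMem_singleton.2 h.adj.ne) h.adj
  simp only [mem_inter, mem_union, mem_att_singleton] at hi hit
  rcases hit with hit | hit
  · exact hc.add_two_le_of_detour h.isComp.off ht htn hlink.symm hi.2 hit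
  · exact hc.add_two_le_of_detour h.isComp.off ht htn hlink hi.1 hit

lemma IsOffEdge.add_two_notMem (hc : IsMaxCycle G c) (h : IsOffEdge G c x y)
    (hi : i ∈ att G c {x} ∩ att G c {y}) : i + 2 ∉ att G c {x} ∪ att G c {y} := by
  intro hi2
  have := h.three_le hc (t := 2) one_le_two hc.three_le hi (by rwa [Nat.cast_ofNat])
  omega

variable [Fintype V] {δ : ℕ}

lemma IsOffEdge.le_card_att (h : IsOffEdge G c x y) (hδ : ∀ v, δ ≤ G.degree v) :
    δ ≤ #(att G c {x}) + 1 := by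
  have hx : x ∈ ({x, y} : Finset V) := mem_insert_self x {y}
  have hd := (hδ x).trans (h.isComp.degree_le hx (mem_singleton_self x))
  have hxy := degIn_lt_card (G := G) hx
  rw [card_pair h.adj.ne] at hxy
  omega

lemma IsOffEdge.two_le_card (hc : IsMaxCycle G c) (h : IsOffEdge G c x y)
    (h2 : KConnected G 2) : 2 ≤ #(att G c {x} ∪ att G c {y}) := by
  rw [← att_pair]
  exact h.isComp.le_card_att_self hc h2

lemma IsOffEdge.three_le_gap (hc : IsMaxCycle G c) (h : IsOffEdge G c x y) (h2 : KConnected G 2)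
    (hi : i ∈ att G c {x} ∩ att G c {y}) : 3 ≤ gap (att G c {x} ∪ att G c {y}) i := by
  have hU : (att G c {x} ∪ att G c {y}).Nonempty :=
    ⟨i, mem_union_left _ (mem_inter.1 hi).1⟩
  exact h.three_le hc (one_le_gap hU i) (gap_lt (h.two_le_card hc h2) i) hi (next_mem hU i)

lemma IsOffEdge.card_le (hc : IsMaxCycle G c) (h : IsOffEdge G c x y) (h2 : KConnected G 2) :
    2 * #(att G c {x} ∪ att G c {y}) + #(att G c {x} ∩ att G c {y}) ≤ n := by
  simpa using weighted_gap_le (A := att G c {x} ∩ att G c {y}) (B := ∅) (y := 0) (x := 1)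
    (inter_subset_left.trans subset_union_left) (empty_subset _) (disjoint_empty_right _)
    (h.isComp.two_le_gap hc att_pair.ge (h.two_le_card hc h2))
    (fun _ hi => h.three_le_gap hc h2 hi) (by simp)

end OffEdge

section Crossing

variable {G : SimpleGraph V} {n : ℕ} {c : ZMod n → V} {H : Finset V} {i j : ZMod n}

lemma IsMaxCycle.linkedIn_arcSet_of_eq (hc : IsMaxCycle G c) {k : ℕ} (hk : 1 ≤ k) (hkn : k ≤ n)
    (hj : i + k = j + 1) : LinkedIn G (arcSet c i k) (c i) (c j) (k - 1) := by
  obtain ⟨m, rfl⟩ := Nat.exists_eq_add_of_le' hk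
  obtain rfl : j = i + (m : ZMod n) := by
    rw [Nat.cast_succ, ← add_assoc] at hj
    exact (add_right_cancel hj).symm
  exact hc.linkedIn_arcSet i hkn

lemma IsMaxCycle.disjoint_arcSet_of_eq (hc : IsMaxCycle G c) {d s t : ℕ}
    (hj : j = i + (d : ZMod n)) (hs : s ≤ d) (ht : d + t ≤ n) :
    Disjoint (arcSet c i s) (arcSet c j t) := by
  subst hj
  refine (hc.disjoint_arcSet i ht).mono_left fun v hv => ?_
  obtain ⟨k, hk, rfl⟩ := mem_arcSet.1 hv
  exact mem_arcSet.2 ⟨k, hk.trans_le hs, rfl⟩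

variable [NeZero n]

/- Otherwise `c (i + 1), …, c (i + e), c (j + 1), …, c i, H, c j, …, c (i + e + 1)` closes up to
a longer cycle. -/
lemma IsComp.not_crossing (hc : IsMaxCycle G c) (hH : IsComp G c H) {p e : ℕ}
    (hjp : j = i + (p : ZMod n)) (hi : i ∈ att G c H) (hj : j ∈ att G c H) (he : 1 ≤ e)
    (hep : e < p) (hpn : p < n) (h1 : G.Adj (c (i + 1)) (c (i + e + 1))) :
    ¬ G.Adj (c (j + 1)) (c (i + e)) := by
  intro h2
  obtain ⟨v, hv, hiv⟩ := mem_att.1 hi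
  obtain ⟨u, hu, hju⟩ := mem_att.1 hj
  have hn0 : ((n - p : ℕ) : ZMod n) + p = 0 := by
    rw [← Nat.cast_add, Nat.sub_add_cancel hpn.le, ZMod.natCast_self]
  have hp0 : ((p - e : ℕ) : ZMod n) + e = p := by
    rw [← Nat.cast_add, Nat.sub_add_cancel hep.le]
  have arc₁ := hc.linkedIn_arcSet_of_eq (i := i + 1) (j := i + (e : ZMod n)) he (by omega)
    (by ring)
  have arc₂ := hc.linkedIn_arcSet_of_eq (i := j + 1) (j := i) (k := n - p) (by omega) (by omega)
    (by linear_combination hjp + hn0)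
  have arc₃ := hc.linkedIn_arcSet_of_eq (i := i + (e : ZMod n) + 1) (j := j) (k := p - e) (by omega)
    (by omega) (by linear_combination hp0 - hjp)
  have disj₁₂ := hc.disjoint_arcSet_of_eq (i := i + 1) (j := j + 1) (s := e) (t := n - p)
    (d := p) (by linear_combination hjp) (by omega) (by omega)
  have disj₁₃ := hc.disjoint_arcSet_of_eq (i := i + 1) (j := i + (e : ZMod n) + 1) (s := e)
    (t := p - e) (d := e) (by ring) le_rfl (by omega)
  have disj₃₂ := hc.disjoint_arcSet_of_eq (i := i + (e : ZMod n) + 1) (j := j + 1) (s := p - e)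
    (t := n - p) (d := p - e) (by linear_combination hjp - hp0) le_rfl (by omega)
  have hdisj := disjoint_arcSet_of_forall_notMem hH.off
  have hpath := ((arc₁.append arc₂ disj₁₂ h2.symm).append (hH.conn.linkedIn hv hu)
    (disjoint_union_left.2 ⟨(hdisj _ _).symm, (hdisj _ _).symm⟩) hiv).append arc₃.symm
    (disjoint_union_left.2 ⟨disjoint_union_left.2 ⟨disj₁₃, disj₃₂.symm⟩, hdisj _ _⟩) hju.symm
  have := hc.lt_of_linkedIn hpath h1.symm
  omega

/- Otherwise `c (i + 1), …, c j, H, c i, …, c (j + 1), z` closes up to a longer cycle. -/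
lemma IsComp.not_common_off (hc : IsMaxCycle G c) (hH : IsComp G c H) {z : V} (hz : Off c z)
    (hi : i ∈ att G c H) (hj : j ∈ att G c H) (hij : i ≠ j) (h1 : G.Adj (c (i + 1)) z) :
    ¬ G.Adj (c (j + 1)) z := by
  intro h2
  have hzH : z ∉ H := fun hzH => hH.succ_notMem hc hi (mem_att.2 ⟨z, hzH, h1⟩)
  obtain ⟨p, hpn, hjp⟩ := exists_eq_add_natCast i j
  have hp : 1 ≤ p := Nat.one_le_iff_ne_zero.2 <| by
    rintro rfl
    exact hij (by rw [hjp, Nat.cast_zero, add_zero])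
  obtain ⟨v, hv, hiv⟩ := mem_att.1 hi
  obtain ⟨u, hu, hju⟩ := mem_att.1 hj
  have hn0 : ((n - p : ℕ) : ZMod n) + p = 0 := by
    rw [← Nat.cast_add, Nat.sub_add_cancel hpn.le, ZMod.natCast_self]
  have arc₁ := hc.linkedIn_arcSet_of_eq (i := i + 1) (j := j) hp (by omega)
    (by linear_combination -hjp)
  have arc₂ := hc.linkedIn_arcSet_of_eq (i := j + 1) (j := i) (k := n - p) (by omega) (by omega)
    (by linear_combination hjp + hn0)
  have disj₁₂ := hc.disjoint_arcSet_of_eq (i := i + 1) (j := j + 1) (s := p) (t := n - p)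
    (d := p) (by linear_combination hjp) le_rfl (by omega)
  have hdisj := disjoint_arcSet_of_forall_notMem hH.off
  have hdisjz := disjoint_arcSet_of_forall_notMem (c := c) (R := {z}) fun k hk =>
    hz k (mem_singleton.1 hk)
  have hpath := ((arc₁.append (hH.conn.linkedIn hu hv) (hdisj _ _).symm hju).append arc₂.symm
    (disjoint_union_left.2 ⟨disj₁₂, hdisj _ _⟩) hiv.symm).append (.refl (mem_singleton_self z))
    (disjoint_union_left.2 ⟨disjoint_union_left.2 ⟨(hdisjz _ _).symm,
      disjoint_singleton_right.2 hzH⟩, (hdisjz _ _).symm⟩) h2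
  have := hc.lt_of_linkedIn hpath h1.symm
  omega

end Crossing

section Shift

variable {n : ℕ} {i j : ZMod n} {P : Set (ZMod n)} {X Y E : Finset (ZMod n)}

lemma injOn_ite_sub_one (h : ∀ k ∈ P, k - 1 ∉ P → k ∉ X) :
    Set.InjOn (fun k => if k ∈ P then k - 1 else k) X := by
  intro k hk l hl hkl
  dsimp only at hkl
  split_ifs at hkl with h1 h2 h2
  · exact sub_left_injective hkl
  · exact absurd hk (h k h1 (hkl ▸ h2))
  · exact absurd hl (h l h2 (hkl ▸ h1))
  · exact hkl

/- Moving `X` down by one inside `P` and `Y` down by one outside `P` makes them disjoint. -/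
lemma card_add_card_le_of_shift (hX : ∀ k ∈ X, k ∈ E ∧ k - 1 ∈ E)
    (hY : ∀ k ∈ Y, k ∈ E ∧ k - 1 ∈ E) (hPX : ∀ k ∈ P, k - 1 ∉ P → k ∉ X)
    (hPY : ∀ k ∉ P, k - 1 ∈ P → k ∉ Y) (hYX : ∀ k ∈ P, k + 1 ∈ P → k ∈ Y → k + 1 ∉ X)
    (hXY : ∀ k ∉ P, k + 1 ∉ P → k ∈ X → k + 1 ∉ Y) : #X + #Y ≤ #E := by
  set f : ZMod n → ZMod n := fun k => if k ∈ P then k - 1 else k with hf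
  set g : ZMod n → ZMod n := fun k => if k ∈ P then k else k - 1 with hg
  have hfinj : Set.InjOn f X := injOn_ite_sub_one hPX
  have hginj : Set.InjOn g Y := by
    simpa only [hg, Set.mem_compl_iff, ite_not] using
      injOn_ite_sub_one (P := Pᶜ) fun k hk hk1 => hPY k hk (not_not.1 hk1)
  have hdisj : Disjoint (X.image f) (Y.image g) := by
    simp only [Finset.disjoint_left, mem_image, not_exists, not_and]
    rintro _ ⟨k, hk, rfl⟩ l hl hkl
    simp only [hf, hg] at hkl
    split_ifs at hkl with h1 h2 h2
    · obtain rfl := eq_sub_iff_add_eq.1 hkl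
      exact hYX l h1 h2 hl hk
    · exact h2 (hkl ▸ h1)
    · exact h1 (sub_left_injective hkl ▸ h2)
    · obtain rfl := sub_eq_iff_eq_add.1 hkl
      exact hXY k h2 h1 hk hl
  rw [← card_image_of_injOn hfinj, ← card_image_of_injOn hginj, ← card_union_of_disjoint hdisj]
  refine card_le_card (union_subset (image_subset_iff.2 fun k hk => ?_)
    (image_subset_iff.2 fun k hk => ?_))
  · simp only [hf]
    split_ifs
    exacts [(hX k hk).2, (hX k hk).1]
  · simp only [hg]
    split_ifs
    exacts [(hY k hk).1, (hY k hk).2]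

lemma eq_of_mem_arcSet_of_sub_one_notMem {k : ZMod n} {p : ℕ} (hk : k ∈ arcSet id i p)
    (hk' : k - 1 ∉ arcSet id i p) : k = i := by
  obtain ⟨_ | t, ht, rfl⟩ := mem_arcSet.1 hk
  · simp
  · exact absurd (mem_arcSet.2 ⟨t, by omega, by simp only [id]; push_cast; ring⟩) hk'

lemma eq_add_of_notMem_arcSet_of_sub_one_mem {k : ZMod n} {p : ℕ} (hk : k ∉ arcSet id i p)
    (hk' : k - 1 ∈ arcSet id i p) : k = i + p := by
  obtain ⟨t, ht, hkt⟩ := mem_arcSet.1 hk'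
  rw [id, eq_sub_iff_add_eq] at hkt
  have hsucc : i + ((t + 1 : ℕ) : ZMod n) = k := by
    rw [← hkt]
    push_cast
    ring
  have htp : t + 1 = p := by
    by_contra hne
    exact hk (mem_arcSet.2 ⟨t + 1, by omega, hsucc⟩)
  rw [← hsucc, htp]

variable [NeZero n]

lemma card_add_card_le_of_not_crossing {p : ℕ} (hjp : j = i + (p : ZMod n)) (hp : 1 ≤ p)
    (hpn : p < n) (hX : ∀ k ∈ X, k ∈ E ∧ k - 1 ∈ E) (hY : ∀ k ∈ Y, k ∈ E ∧ k - 1 ∈ E)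
    (hi : i + 1 ∉ X) (hj : j + 1 ∉ Y)
    (hYX : ∀ e : ℕ, 1 ≤ e → e < p → i + (e : ZMod n) ∈ Y → i + e + 1 ∉ X)
    (hXY : ∀ e : ℕ, 1 ≤ e → e < n - p → j + (e : ZMod n) ∈ X → j + e + 1 ∉ Y) :
    #X + #Y ≤ #E := by
  have hmem : ∀ {t : ℕ}, t < p → ∀ {k}, i + 1 + (t : ZMod n) = k → k ∈ arcSet id (i + 1) p :=
    fun ht _ hk => mem_arcSet.2 ⟨_, ht, hk⟩
  have hj1 : j + 1 ∉ arcSet id (i + 1) p := fun h => by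
    obtain ⟨t, ht, hjt⟩ := mem_arcSet.1 h
    exact ht.ne (eq_of_natCast_eq (ht.trans hpn) hpn
      (add_left_cancel (hjt.trans (by rw [hjp, add_right_comm]))))
  refine card_add_card_le_of_shift (P := (arcSet id (i + 1) p : Finset (ZMod n))) hX hY ?_ ?_ ?_ ?_
  · rintro k hk hk1
    rwa [eq_of_mem_arcSet_of_sub_one_notMem hk hk1]
  · rintro k hk hk1
    rwa [eq_add_of_notMem_arcSet_of_sub_one_mem hk hk1, add_right_comm, ← hjp]
  · rintro k hk hk1 hkY
    obtain ⟨t, ht, rfl⟩ := mem_arcSet.1 hk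
    have hkt : id (i + 1 + (t : ZMod n)) = i + ((t + 1 : ℕ) : ZMod n) := by
      rw [id]
      push_cast
      ring
    rw [hkt] at hk1 hkY ⊢
    refine hYX _ (by omega) (lt_of_le_of_ne (by omega) ?_) hkY
    rintro rfl
    exact hj1 (hjp ▸ hk1)
  · rintro k hk hk1 hkX
    obtain ⟨t, ht, rfl⟩ := exists_eq_add_natCast j k
    refine hXY t ?_ ?_ hkX
    · by_contra! h0
      obtain rfl : t = 0 := by omega
      refine hk (hmem (t := p - 1) (by omega) ?_)
      rw [hjp, Nat.cast_sub hp]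
      push_cast
      ring
    · by_contra! hle
      refine hk1 (hmem (t := p + t - n) (by omega) ?_)
      rw [hjp, Nat.cast_sub (by omega), ZMod.natCast_self]
      push_cast
      ring

end Shift

section Cut

variable {n : ℕ} {G : SimpleGraph V} {c : ZMod n → V} {A B S H : Finset V}

lemma IsCut.symm (h : IsCut G A B S) : IsCut G B A S :=
  ⟨h.left_right.symm, h.right_sep, h.left_sep, fun v => or_left_comm.1 (h.cover v),
    fun a ha b hb hab => h.not_adj b hb a ha hab.symm⟩

lemma IsCut.mem_or_mem_of_adj (h : IsCut G A B S) {a v : V} (ha : a ∈ A) (hav : G.Adj a v) :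
    v ∈ A ∨ v ∈ S := by
  have hvB : v ∉ B := fun hv => h.not_adj a ha v hv hav
  simpa only [hvB, false_or] using h.cover v

/-- The vertices of `S` off the cycle `c`. -/
noncomputable def offPart (c : ZMod n → V) (S : Finset V) : Finset V :=
  S.filter (Off c)

lemma mem_offPart {v : V} : v ∈ offPart c S ↔ v ∈ S ∧ Off c v := mem_filter

lemma IsComp.reverse (hH : IsComp G c H) : IsComp G (fun k => c (-k)) H := by
  refine ⟨hH.conn, fun k => hH.off _, fun a ha b hab => (hH.closed a ha b hab).imp_right ?_⟩
  rintro ⟨k, rfl⟩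
  exact ⟨-k, by rw [neg_neg]⟩

lemma off_reverse : Off (fun k => c (-k)) = Off c := by
  ext v
  exact ⟨fun h k => by simpa only [neg_neg] using h (-k), fun h k => h _⟩

variable [NeZero n] {δ : ℕ} {i j k : ZMod n}

/-- The positions of the edges of the cycle `c` not contained in `B`. -/
noncomputable def outerEdges (c : ZMod n → V) (B : Finset V) : Finset (ZMod n) :=
  {k | ¬ (c k ∈ B ∧ c (k + 1) ∈ B)}

lemma mem_outerEdges : k ∈ outerEdges c B ↔ ¬ (c k ∈ B ∧ c (k + 1) ∈ B) :=
  mem_filter_univ k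

lemma IsCut.mem_outerEdges_of_mem_att (hcut : IsCut G A B S) {a : V} (ha : a ∈ A)
    (hk : k ∈ att G c {a}) : k ∈ outerEdges c B ∧ k - 1 ∈ outerEdges c B := by
  have hkB : c k ∉ B := fun hkB => hcut.not_adj a ha _ hkB (mem_att_singleton.1 hk).symm
  refine ⟨mem_outerEdges.2 fun h => hkB h.1, mem_outerEdges.2 fun h => hkB ?_⟩
  rw [← sub_add_cancel k 1]
  exact h.2

lemma mem_att_reverse {J : Finset V} : k ∈ att G (fun k => c (-k)) J ↔ -k ∈ att G c J := by
  rw [mem_att, mem_att]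

lemma card_outerEdges_reverse : #(outerEdges (fun k => c (-k)) B) = #(outerEdges c B) := by
  refine card_equiv (Equiv.subLeft (-1)) fun k => ?_
  have hk : -1 - k + 1 = -k := by ring
  rw [mem_outerEdges, mem_outerEdges, and_comm, Equiv.subLeft_apply, hk, neg_add_rev,
    ← sub_eq_add_neg]

lemma IsCut.card_att_add_card_att_le (hcut : IsCut G A B S) (hc : IsMaxCycle G c)
    (hH : IsComp G c H) (hi : i ∈ att G c H) (hj : j ∈ att G c H) (hij : i ≠ j)
    (hiA : c (i + 1) ∈ A) (hjA : c (j + 1) ∈ A) :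
    #(att G c {c (i + 1)}) + #(att G c {c (j + 1)}) ≤ #(outerEdges c B) := by
  obtain ⟨p, hpn, hjp⟩ := exists_eq_add_natCast i j
  have hp : 1 ≤ p := Nat.one_le_iff_ne_zero.2 <| by
    rintro rfl
    exact hij (by rw [hjp, Nat.cast_zero, add_zero])
  have hip : i = j + ((n - p : ℕ) : ZMod n) := by
    rw [hjp, Nat.cast_sub hpn.le, ZMod.natCast_self]
    ring
  refine card_add_card_le_of_not_crossing hjp hp hpn
    (fun k => hcut.mem_outerEdges_of_mem_att hiA) (fun k => hcut.mem_outerEdges_of_mem_att hjA)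
    ?_ ?_ ?_ ?_ <;> simp only [mem_att_singleton]
  · exact G.irrefl
  · exact G.irrefl
  · exact fun e he hep hY hX => hH.not_crossing hc hjp hi hj he hep hpn hX.symm hY.symm
  · exact fun e he hep hX hY => hH.not_crossing hc hip hj hi he hep (by omega) hY.symm hX.symm

variable [Fintype V]

lemma degree_le_card_off_add_card_att (G : SimpleGraph V) (c : ZMod n → V) (b : V) :
    G.degree b ≤ #(offPart c (G.neighborFinset b)) + #(att G c {b}) := by
  have hsub : G.neighborFinset b ⊆ offPart c (G.neighborFinset b) ∪ (att G c {b}).image c := by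
    intro v hv
    rw [mem_union, mem_offPart, mem_image, or_iff_not_imp_left, not_and, Off]
    intro h
    obtain ⟨k, rfl⟩ := not_forall_not.1 (h hv)
    exact ⟨k, mem_att_singleton.2 ((mem_neighborFinset _ _ _).1 hv).symm, rfl⟩
  calc G.degree b ≤ #(offPart c (G.neighborFinset b) ∪ (att G c {b}).image c) := card_le_card hsub
    _ ≤ #(offPart c (G.neighborFinset b)) + #((att G c {b}).image c) := card_union_le _ _
    _ ≤ _ := by gcongr; exact card_image_le

lemma IsCut.card_off_add_card_off_le (hcut : IsCut G A B S) (hc : IsMaxCycle G c)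
    (hH : IsComp G c H) (hA : ∀ a ∈ A, ¬ Off c a) (hi : i ∈ att G c H) (hj : j ∈ att G c H)
    (hij : i ≠ j) (hiA : c (i + 1) ∈ A) (hjA : c (j + 1) ∈ A) :
    #(offPart c (G.neighborFinset (c (i + 1)))) + #(offPart c (G.neighborFinset (c (j + 1)))) ≤
      #(offPart c S) := by
  have hsub : ∀ a ∈ A, offPart c (G.neighborFinset a) ⊆ offPart c S := by
    intro a ha z hz
    rw [mem_offPart, mem_neighborFinset] at hz
    have hzS := (hcut.mem_or_mem_of_adj ha hz.1).resolve_left fun hzA => hA z hzA hz.2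
    exact mem_offPart.2 ⟨hzS, hz.2⟩
  rw [← card_union_of_disjoint]
  · exact card_le_card (union_subset (hsub _ hiA) (hsub _ hjA))
  · simp only [Finset.disjoint_left, mem_offPart, mem_neighborFinset]
    exact fun z hz hz' => hH.not_common_off hc hz.2 hi hj hij hz.1 hz'.1

lemma IsCut.two_mul_le_of_succ (hcut : IsCut G A B S) (hc : IsMaxCycle G c) (hH : IsComp G c H)
    (hδ : ∀ v, δ ≤ G.degree v) (hA : ∀ a ∈ A, ¬ Off c a) (hi : i ∈ att G c H)
    (hj : j ∈ att G c H) (hij : i ≠ j) (hiA : c (i + 1) ∈ A) (hjA : c (j + 1) ∈ A) :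
    2 * δ ≤ #(outerEdges c B) + #(offPart c S) := by
  have hoff := hcut.card_off_add_card_off_le hc hH hA hi hj hij hiA hjA
  have hon := hcut.card_att_add_card_att_le hc hH hi hj hij hiA hjA
  have hdi := (hδ (c (i + 1))).trans (degree_le_card_off_add_card_att G c _)
  have hdj := (hδ (c (j + 1))).trans (degree_le_card_off_add_card_att G c _)
  omega

lemma IsCut.two_mul_le_of_pred (hcut : IsCut G A B S) (hc : IsMaxCycle G c) (hH : IsComp G c H)
    (hδ : ∀ v, δ ≤ G.degree v) (hA : ∀ a ∈ A, ¬ Off c a) (hi : i ∈ att G c H)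
    (hj : j ∈ att G c H) (hij : i ≠ j) (hiA : c (i - 1) ∈ A) (hjA : c (j - 1) ∈ A) :
    2 * δ ≤ #(outerEdges c B) + #(offPart c S) := by
  have hneg : ∀ k : ZMod n, -(-k + 1) = k - 1 := fun k => by ring
  have := hcut.two_mul_le_of_succ hc.reverse hH.reverse hδ (by rwa [off_reverse])
    (i := -i) (j := -j) (by rwa [mem_att_reverse, neg_neg]) (by rwa [mem_att_reverse, neg_neg])
    (neg_injective.ne hij) (by rwa [hneg]) (by rwa [hneg])
  rwa [card_outerEdges_reverse, offPart, off_reverse] at this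

end Cut

section OffCut

variable {n : ℕ}

lemma card_image_add (T : Finset (ZMod n)) (a : ZMod n) : #(T.image (· + a)) = #T :=
  card_image_of_injective _ (add_left_injective a)

lemma two_mul_card_add_card_le {X Z E : Finset (ZMod n)} (hZ : ∀ k ∈ Z, k ∈ E ∧ k - 1 ∈ E)
    (hX : ∀ k ∈ X, k + 1 ∈ E) (hZZ : ∀ k ∈ Z, k + 1 ∉ Z)
    (hXZ : ∀ k ∈ X, k + 1 ∉ Z ∧ k + 2 ∉ Z) : 2 * #Z + #X ≤ #E := by
  have hdZ : Disjoint Z (Z.image (· + -1)) := by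
    rw [Finset.disjoint_right, forall_mem_image]
    exact fun k hk hk' => hZZ _ hk' (by rwa [neg_add_cancel_right])
  have hdX : Disjoint (Z ∪ Z.image (· + -1)) (X.image (· + 1)) := by
    rw [Finset.disjoint_right, forall_mem_image]
    intro k hk hk'
    rcases mem_union.1 hk' with hk' | hk'
    · exact (hXZ k hk).1 hk'
    · obtain ⟨l, hl, hlk⟩ := mem_image.1 hk'
      obtain rfl : l = k + 2 := by linear_combination hlk
      exact (hXZ k hk).2 hl
  have hsub : Z ∪ Z.image (· + -1) ∪ X.image (· + 1) ⊆ E :=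
    union_subset (union_subset (fun k hk => (hZ k hk).1)
      (image_subset_iff.2 fun k hk => by simpa only [← sub_eq_add_neg] using (hZ k hk).2))
      (image_subset_iff.2 hX)
  have hcard := card_le_card hsub
  rw [card_union_of_disjoint hdX, card_union_of_disjoint hdZ, card_image_add, card_image_add]
    at hcard
  omega

variable [NeZero n] {G : SimpleGraph V} {c : ZMod n → V} {A B S T : Finset V} {δ : ℕ}
  {i j k : ZMod n} {x y z : V}

/-- The positions on the cycle `c` of the vertices of `T`. -/
noncomputable def posIn (c : ZMod n → V) (T : Finset V) : Finset (ZMod n) :=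
  {k | c k ∈ T}

lemma mem_posIn : k ∈ posIn c T ↔ c k ∈ T := mem_filter_univ k

lemma IsMaxCycle.card_posIn_add_card_offPart (hc : IsMaxCycle G c) (T : Finset V) :
    #(posIn c T) + #(offPart c T) = #T := by
  have hoff : T.filter (fun v => ¬ Off c v) = (posIn c T).image c := by
    ext v
    rw [mem_filter, mem_image, Off, not_forall_not]
    constructor
    · rintro ⟨hv, k, rfl⟩
      exact ⟨k, mem_posIn.2 hv, rfl⟩
    · rintro ⟨k, hk, rfl⟩
      exact ⟨mem_posIn.1 hk, k, rfl⟩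
  rw [← card_filter_add_card_filter_not (s := T) (Off c), hoff,
    card_image_of_injective _ hc.injective, add_comm, offPart]

lemma IsMaxCycle.card_posIn (hc : IsMaxCycle G c) (hT : ∀ v ∈ T, ¬ Off c v) :
    #(posIn c T) = #T := by
  rw [← hc.card_posIn_add_card_offPart T, offPart, filter_false_of_mem hT, card_empty, add_zero]

lemma IsCut.forall_notMem_of_succ (hcut : IsCut G A B S) (hc : IsMaxCycle G c)
    (hS : ∀ k, c k ∈ S → c (k + 1) ∉ A) (hj : c j ∉ A) : c k ∉ A := by
  refine forall_of_succ (p := fun k => c k ∉ A) (fun k hk hk1 => ?_) hj k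
  exact (hcut.mem_or_mem_of_adj hk1 (hc.adj k).symm).elim hk fun h => hS k h hk1

lemma IsCut.forall_mem_of_pred (hcut : IsCut G A B S) (hc : IsMaxCycle G c)
    (hS : ∀ k, c (k + 1) ∈ S → c k ∉ A) (hj : c j ∈ A) : c k ∈ A :=
  forall_of_succ (p := fun k => c k ∈ A)
    (fun k hk => (hcut.mem_or_mem_of_adj hk (hc.adj k)).resolve_right fun h => hS k h hk) hj k

lemma IsCut.two_mul_card_att_add_le (hcut : IsCut G A B S) (hc : IsMaxCycle G c)
    (h : IsOffEdge G c x y) (hx : x ∈ A) :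
    2 * #(att G c {x}) + #{k ∈ att G c {x} ∩ att G c {y} | k + 1 ∈ outerEdges c B} ≤
      #(outerEdges c B) := by
  refine two_mul_card_add_card_le (fun k => hcut.mem_outerEdges_of_mem_att hx)
    (fun k hk => (mem_filter.1 hk).2)
    (fun k hk hk1 => h.succ_notMem hc (mem_union_left _ hk) (mem_union_left _ hk1))
    fun k hk => ?_
  have hk' := (mem_filter.1 hk).1
  exact ⟨fun hk1 => h.succ_notMem hc (mem_union_left _ (mem_inter.1 hk').1) (mem_union_left _ hk1),
    fun hk2 => h.add_two_notMem hc hk' (mem_union_left _ hk2)⟩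

lemma IsCut.mem_posIn_of_notMem_outerEdges (hcut : IsCut G A B S) (hc : IsMaxCycle G c)
    (hx : x ∈ A) (hk : k ∈ att G c {x}) (hk1 : k + 1 ∉ outerEdges c B) : k ∈ posIn c S := by
  rw [mem_outerEdges, not_not] at hk1
  rw [mem_posIn]
  exact (hcut.mem_or_mem_of_adj hx (mem_att_singleton.1 hk).symm).resolve_left
    fun hkA => hcut.not_adj _ hkA _ hk1.1 (hc.adj k)

variable [Fintype V]

lemma IsOffEdge.four_mul_le (hc : IsMaxCycle G c) (h : IsOffEdge G c x y) (h2 : KConnected G 2)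
    (hδ : ∀ v, δ ≤ G.degree v) : 4 * δ ≤ n + #(att G c {x} ∩ att G c {y}) + 4 := by
  have hle := h.card_le hc h2
  have hx := h.le_card_att hδ
  have hy := h.symm.le_card_att hδ
  have hxy := card_union_add_card_inter (att G c {x}) (att G c {y})
  omega

lemma IsCut.two_mul_le_of_isolated (hcut : IsCut G A B S) (hc : IsMaxCycle G c)
    (hδ : ∀ v, δ ≤ G.degree v) (hzA : z ∈ A) (hz : Off c z) (hno : ∀ a, Off c a → ¬ G.Adj z a) :
    2 * δ ≤ #(outerEdges c B) := by
  have hoff : offPart c (G.neighborFinset z) = ∅ :=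
    filter_false_of_mem fun a ha h => hno a h ((mem_neighborFinset _ _ _).1 ha)
  have hdeg := (hδ z).trans (degree_le_card_off_add_card_att G c z)
  rw [hoff, card_empty, zero_add] at hdeg
  have hcard := two_mul_card_add_card_le (X := ∅) (E := outerEdges c B)
    (fun k => hcut.mem_outerEdges_of_mem_att (k := k) hzA) (by simp)
    (fun k => (isComp_singleton hz hno).succ_notMem hc) (by simp)
  omega

/- If the bound failed, all but one of the common attachments of `x` and `y` would exhaust the
separator and be followed on the cycle by a vertex of `B`, so the cycle could never enter `A`;
but the remaining common attachment lies in `A`. -/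
lemma IsCut.two_mul_le_of_offEdge (hcut : IsCut G A B S) (hc : IsMaxCycle G c)
    (h : IsOffEdge G c x y) (h2 : KConnected G 2) (hδ : ∀ v, δ ≤ G.degree v) (hS : 4 ≤ #S)
    (hn : n + 2 * #S < 4 * δ) (hx : x ∈ A) : 2 * δ ≤ #(outerEdges c B) + #(offPart c S) := by
  set M := att G c {x} ∩ att G c {y}
  set X := {k ∈ M | k + 1 ∈ outerEdges c B}
  set Y := {k ∈ M | k + 1 ∉ outerEdges c B}
  have hXY : #X + #Y = #M := card_filter_add_card_filter_not _
  have hMcard : 4 * δ ≤ n + #M + 4 := h.four_mul_le hc h2 hδ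
  have hout : 2 * #(att G c {x}) + #X ≤ #(outerEdges c B) := hcut.two_mul_card_att_add_le hc h hx
  have hxcard := h.le_card_att hδ
  have hMx : M ⊆ att G c {x} := inter_subset_left
  have hYS : Y ⊆ posIn c S := fun k hk =>
    hcut.mem_posIn_of_notMem_outerEdges hc hx (hMx (mem_filter.1 hk).1) (mem_filter.1 hk).2
  have hYle := card_le_card hYS
  have hSsplit := hc.card_posIn_add_card_offPart S
  by_contra! hlt
  have hYeq : Y = posIn c S := eq_of_subset_of_card_le hYS (by omega)
  obtain ⟨i, hi⟩ : X.Nonempty := card_pos.1 (by omega)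
  obtain ⟨j, hj⟩ : Y.Nonempty := card_pos.1 (by omega)
  have hSA : ∀ k, c k ∈ S → c (k + 1) ∉ A := by
    intro k hk hkA
    have hkY : k ∈ Y := hYeq ▸ mem_posIn.2 hk
    have hkB := (mem_filter.1 hkY).2
    rw [mem_outerEdges, not_not] at hkB
    exact Finset.disjoint_left.1 hcut.left_right hkA hkB.1
  have hiS : c i ∉ S := fun hiS =>
    (mem_filter.1 (hYeq ▸ mem_posIn.2 hiS : i ∈ Y)).2 (mem_filter.1 hi).2
  have hiA : c i ∈ A := (hcut.mem_or_mem_of_adj hx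
    (mem_att_singleton.1 (hMx (mem_filter.1 hi).1)).symm).resolve_right hiS
  exact hcut.forall_notMem_of_succ hc hSA (hSA j (mem_posIn.1 (hYS hj))) hiA

lemma IsCut.two_mul_le_of_off (hcut : IsCut G A B S) (hc : IsMaxCycle G c) (hs : SparseOff G c)
    (h2 : KConnected G 2) (hδ : ∀ v, δ ≤ G.degree v) (hS : 4 ≤ #S) (hn : n + 2 * #S < 4 * δ)
    (hzA : z ∈ A) (hz : Off c z) : 2 * δ ≤ #(outerEdges c B) + #(offPart c S) := by
  by_cases hno : ∀ a, Off c a → ¬ G.Adj z a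
  · exact (hcut.two_mul_le_of_isolated hc hδ hzA hz hno).trans (Nat.le_add_right _ _)
  · push Not at hno
    obtain ⟨a, ha, hza⟩ := hno
    exact hcut.two_mul_le_of_offEdge hc ⟨hs, hza, hz, ha⟩ h2 hδ hS hn hzA

end OffCut

section GapCount

variable {n : ℕ} {U M P : Finset (ZMod n)} {i : ZMod n}

lemma card_filter_gap_add_le (hi : i ∈ U) (h2 : 2 ≤ gap U i) :
    #((range (gap U i)).filter fun t : ℕ => i + (t : ZMod n) ∈ P \ U) + min (gap U i) 3 ≤
      gap U i + (if i + 1 ∈ P then 1 else 0) + if next U i - 1 ∈ P then 1 else 0 := by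
  have hlast : i + ((gap U i - 1 : ℕ) : ZMod n) = next U i - 1 := by
    rw [Nat.cast_sub (by omega), next]
    push_cast
    ring
  have hsub : (range (gap U i)).filter (fun t : ℕ => i + (t : ZMod n) ∈ P \ U) ⊆
      Ico 2 (gap U i - 1) ∪ ((if i + 1 ∈ P then {1} else ∅) ∪
        if next U i - 1 ∈ P then {gap U i - 1} else ∅) := by
    intro t ht
    rw [mem_filter, mem_range, mem_sdiff] at ht
    obtain ⟨htg, htP, htU⟩ := ht
    have ht0 : t ≠ 0 := by
      rintro rfl
      exact htU (by simpa using hi)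
    rw [mem_union, mem_union, mem_Ico]
    by_cases ht1 : t = 1
    · subst ht1
      rw [Nat.cast_one] at htP
      simp [htP]
    by_cases ht2 : t = gap U i - 1
    · rw [ht2, hlast] at htP
      simp [htP, ht2]
    · exact Or.inl ⟨by omega, by omega⟩
  have hcard := card_le_card hsub
  rcases h2.eq_or_lt with hg2 | hg3
  · have hnext : next U i - 1 = i + 1 := by
      rw [← hlast, ← hg2, Nat.cast_one]
    have hIco : Ico 2 (gap U i - 1) = ∅ := Ico_eq_empty (by omega)
    rw [hIco, empty_union, hnext, ← hg2, union_self, apply_ite card, card_singleton,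
      card_empty] at hcard
    rw [hnext, ← hg2]
    omega
  · replace hcard := hcard.trans
      ((card_union_le _ _).trans (Nat.add_le_add_left (card_union_le _ _) _))
    rw [Nat.card_Ico, apply_ite card, apply_ite card, card_singleton, card_singleton,
      card_empty] at hcard
    omega

lemma two_mul_card_add_le_of_gap [NeZero n] (hU : U.Nonempty) (hM : M ⊆ U)
    (h2 : ∀ i ∈ U, 2 ≤ gap U i) (h3 : ∀ i ∈ M, 3 ≤ gap U i) :
    2 * #U + #M + #(P \ U) ≤ n + #{i ∈ U | i + 1 ∈ P} + #{i ∈ U | i - 1 ∈ P} := by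
  have key : ∀ i ∈ U, 2 + (if i ∈ M then 1 else 0) +
      #((range (gap U i)).filter fun t : ℕ => i + (t : ZMod n) ∈ P \ U) ≤
        gap U i + (if i + 1 ∈ P then 1 else 0) + if next U i - 1 ∈ P then 1 else 0 := by
    intro i hi
    have hle := card_filter_gap_add_le (P := P) hi (h2 i hi)
    have hmin : 2 + (if i ∈ M then 1 else 0) ≤ min (gap U i) 3 := by
      split_ifs with hiM
      · exact le_min (h3 i hiM) le_rfl
      · exact le_min (h2 i hi) (by norm_num)
    omega
  have hsum := sum_le_sum key
  simp only [sum_add_distrib, sum_const, smul_eq_mul, sum_ite_mem, inter_eq_right.2 hM,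
    ← card_filter] at hsum
  have hP : #(P \ U) ≤ _ := card_le_sum_card_filter_gap hU _
  have hgap := sum_gap_le U
  have hnext : #{i ∈ U | next U i - 1 ∈ P} ≤ #{i ∈ U | i - 1 ∈ P} := by
    refine card_le_card_of_injOn (next U) (fun i hi => ?_)
      ((next_injOn U).mono (coe_subset.2 (filter_subset _ U)))
    exact mem_coe.2 (mem_filter.2 ⟨next_mem hU i, (mem_filter.1 hi).2⟩)
  omega

end GapCount

section Separator

variable {n : ℕ} [NeZero n] {G : SimpleGraph V} {c : ZMod n → V} {A B S : Finset V} {δ : ℕ}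
  {i : ZMod n} {x y : V}

lemma IsCut.mem_or_mem_of_mem_outerEdges (hcut : IsCut G A B S) (hc : IsMaxCycle G c)
    (hA : i ∈ outerEdges c A) (hB : i ∈ outerEdges c B) : c i ∈ S ∨ c (i + 1) ∈ S := by
  rw [mem_outerEdges] at hA hB
  by_contra! h
  rcases hcut.cover (c i) with hi | hi | hi
  · exact hA ⟨hi, (hcut.mem_or_mem_of_adj hi (hc.adj i)).resolve_right h.2⟩
  · exact hB ⟨hi, (hcut.symm.mem_or_mem_of_adj hi (hc.adj i)).resolve_right h.2⟩
  · exact h.1 hi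

lemma IsCut.four_mul_le (hcut : IsCut G A B S) (hc : IsMaxCycle G c)
    (hA : 2 * δ ≤ #(outerEdges c B) + #(offPart c S))
    (hB : 2 * δ ≤ #(outerEdges c A) + #(offPart c S)) : 4 * δ ≤ n + 2 * #S := by
  have hsub : outerEdges c A ∩ outerEdges c B ⊆ posIn c S ∪ (posIn c S).image (· + -1) := by
    intro k hk
    rw [mem_union, mem_posIn, mem_image]
    refine (hcut.mem_or_mem_of_mem_outerEdges hc (mem_inter.1 hk).1 (mem_inter.1 hk).2).imp_right
      fun h => ⟨k + 1, mem_posIn.2 h, add_neg_cancel_right k 1⟩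
  have hinter := (card_le_card hsub).trans (card_union_le _ _)
  rw [card_image_add] at hinter
  have hunion := card_le_univ (outerEdges c A ∪ outerEdges c B)
  rw [ZMod.card] at hunion
  have hadd := card_union_add_card_inter (outerEdges c A) (outerEdges c B)
  have hS := hc.card_posIn_add_card_offPart S
  omega

lemma IsCut.exists_notMem_succ_mem (hcut : IsCut G A B S) (hc : IsMaxCycle G c) {k l : ZMod n}
    (hk : c k ∈ A) (hl : c l ∈ B) : ∃ i, c i ∉ B ∧ c (i + 1) ∈ S := by
  by_contra! hno
  have hAB := Finset.disjoint_left.1 hcut.left_right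
  exact hAB (hcut.forall_mem_of_pred hc (fun i hi hiA => hno i (hAB hiA) hi) hk) hl

lemma IsCut.card_posIn_inter_add_one_le (hcut : IsCut G A B S) (hc : IsMaxCycle G c)
    (hiS : c (i + 1) ∈ S) (hiB : c i ∉ B) (U : Finset (ZMod n)) :
    #(posIn c B ∩ U) + 1 ≤ #{k ∈ U | k + 1 ∈ posIn c B} + #(posIn c S) := by
  have hi : i + 1 ∈ posIn c S := mem_posIn.2 hiS
  have hsub : posIn c B ∩ U ⊆
      {k ∈ U | k + 1 ∈ posIn c B} ∪ ((posIn c S).erase (i + 1)).image (· + -1) := by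
    intro k hk
    obtain ⟨hkB, hkU⟩ := mem_inter.1 hk
    rw [mem_posIn] at hkB
    rw [mem_union, mem_filter, mem_posIn]
    refine (hcut.symm.mem_or_mem_of_adj hkB (hc.adj k)).imp (fun h => ⟨hkU, h⟩) fun h => ?_
    have hne : k + 1 ≠ i + 1 := fun h => hiB (add_right_cancel h ▸ hkB)
    exact mem_image.2 ⟨k + 1, mem_erase.2 ⟨hne, mem_posIn.2 h⟩, add_neg_cancel_right k 1⟩
  have hle := (card_le_card hsub).trans (card_union_le _ _)
  rw [card_image_add, card_erase_of_mem hi] at hle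
  have := card_pos.2 ⟨i + 1, hi⟩
  omega

lemma IsOffEdge.card_posIn_add_two_le (hc : IsMaxCycle G c) (h : IsOffEdge G c x y) (hx : x ∈ S)
    (hy : y ∈ S) : #(posIn c S) + 2 ≤ #S := by
  have hsub : ({x, y} : Finset V) ⊆ offPart c S :=
    insert_subset (mem_offPart.2 ⟨hx, h.left⟩)
      (singleton_subset_iff.2 (mem_offPart.2 ⟨hy, h.right⟩))
  have hle := card_le_card hsub
  rw [card_pair h.adj.ne] at hle
  have := hc.card_posIn_add_card_offPart S
  omega

variable [Fintype V]

lemma IsCut.le_card_of_kConnected (hcut : IsCut G A B S) {k : ℕ} (hk : KConnected G k)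
    (hA : A.Nonempty) (hB : B.Nonempty) : k ≤ #S := by
  by_contra! hlt
  obtain ⟨b, hb⟩ := hB
  have huniv := union_eq_univ_of_kConnected hk hA hcut.left_sep
    (fun a ha v hav => mem_union.2 (hcut.mem_or_mem_of_adj ha hav)) hlt
  rcases mem_union.1 (huniv ▸ mem_univ b) with h | h
  · exact Finset.disjoint_left.1 hcut.left_right h hb
  · exact Finset.disjoint_left.1 hcut.right_sep hb h

lemma IsCut.degree_add_card_le (hcut : IsCut G A B S) {b : V} (hb : b ∈ B) {T : Finset V}
    (hT : T ⊆ S) (hbT : ∀ t ∈ T, ¬ G.Adj b t) : G.degree b + 1 + #T ≤ #B + #S := by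
  have hsub : G.neighborFinset b ⊆ B.erase b ∪ S \ T := by
    intro v hv
    rw [mem_neighborFinset] at hv
    rw [mem_union, mem_erase, mem_sdiff]
    exact (hcut.symm.mem_or_mem_of_adj hb hv).imp (fun h => ⟨hv.ne', h⟩)
      fun h => ⟨h, fun hvT => hbT v hvT hv⟩
  have hle : G.degree b ≤ _ := (card_le_card hsub).trans (card_union_le _ _)
  rw [card_erase_of_mem hb, card_sdiff_of_subset hT] at hle
  have hTS := card_le_card hT
  have hBpos := card_pos.2 ⟨b, hb⟩
  omega

lemma IsCut.exists_mem_left (hcut : IsCut G A B S) (hs : SparseOff G c)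
    (hδ : ∀ v, δ ≤ G.degree v) (hA : A.Nonempty) (hlt : #(posIn c S) + 1 < δ) : ∃ k, c k ∈ A := by
  by_contra! hno
  obtain ⟨a, ha⟩ := hA
  have haoff : Off c a := fun k hk => hno k (hk ▸ ha)
  have hoff : #(offPart c (G.neighborFinset a)) ≤ 1 := by
    simp only [card_le_one, mem_offPart, mem_neighborFinset]
    exact fun u hu v hv => hs a u v haoff hu.2 hv.2 hu.1 hv.1
  have hon : att G c {a} ⊆ posIn c S := fun i hi => mem_posIn.2 <|
    (hcut.mem_or_mem_of_adj ha (mem_att_singleton.1 hi).symm).resolve_left (hno i)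
  have hdeg := (hδ a).trans (degree_le_card_off_add_card_att G c a)
  have := card_le_card hon
  omega

lemma IsOffEdge.two_mul_card_add_le (hc : IsMaxCycle G c) (h : IsOffEdge G c x y)
    (h2 : KConnected G 2) (P : Finset (ZMod n)) :
    2 * #(att G c {x} ∪ att G c {y}) + #(att G c {x} ∩ att G c {y}) +
        #(P \ (att G c {x} ∪ att G c {y})) ≤
      n + #{i ∈ att G c {x} ∪ att G c {y} | i + 1 ∈ P} +
        #{i ∈ att G c {x} ∪ att G c {y} | i - 1 ∈ P} := by
  have hU := h.two_le_card hc h2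
  exact two_mul_card_add_le_of_gap (card_pos.1 (by omega))
    (inter_subset_left.trans subset_union_left) (h.isComp.two_le_gap hc att_pair.ge hU)
    fun i hi => h.three_le_gap hc h2 hi

lemma IsCut.four_mul_le_of_mem (hcut : IsCut G A B S) (hc : IsMaxCycle G c)
    (h : IsOffEdge G c x y) (h2 : KConnected G 2) (hδ : ∀ v, δ ≤ G.degree v)
    (hBne : B.Nonempty) (hB : ∀ b ∈ B, ¬ Off c b)
    (hsucc : #{i ∈ att G c {x} ∪ att G c {y} | i + 1 ∈ posIn c B} ≤ 1)
    (hpred : #{i ∈ att G c {x} ∪ att G c {y} | i - 1 ∈ posIn c B} ≤ 1)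
    (hy : y ∈ A) : 4 * δ ≤ n + #S + 4 := by
  obtain ⟨b, hb⟩ := hBne
  have hcount := h.two_mul_card_add_le hc h2 (posIn c B)
  have hBcard := (Nat.add_le_add_right (hδ b) 1).trans
    (hcut.degree_add_card_le hb (empty_subset S) (by simp))
  have hBpos := hc.card_posIn hB
  have hxcard := h.le_card_att hδ
  have hycard := h.symm.le_card_att hδ
  have hxy := card_union_add_card_inter (att G c {x}) (att G c {y})
  have hdisj : Disjoint (att G c {y}) (posIn c B ∩ (att G c {x} ∪ att G c {y})) := by
    rw [Finset.disjoint_left]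
    intro k hk hk'
    exact hcut.not_adj y hy _ (mem_posIn.1 (mem_inter.1 hk').1) (mem_att_singleton.1 hk).symm
  have hle := card_le_card <| union_subset
    (subset_union_right (s₁ := att G c {x}) (s₂ := att G c {y}))
    (inter_subset_right (s₁ := posIn c B) (s₂ := att G c {x} ∪ att G c {y}))
  rw [card_union_of_disjoint hdisj] at hle
  have hsplit := card_sdiff_add_card_inter (posIn c B) (att G c {x} ∪ att G c {y})
  omega

lemma IsCut.four_mul_le_of_mem_sep (hcut : IsCut G A B S) (hc : IsMaxCycle G c)
    (h : IsOffEdge G c x y) (h2 : KConnected G 2) (hδ : ∀ v, δ ≤ G.degree v)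
    (hAne : A.Nonempty) (hBne : B.Nonempty) (hB : ∀ b ∈ B, ¬ Off c b)
    (hsucc : #{i ∈ att G c {x} ∪ att G c {y} | i + 1 ∈ posIn c B} ≤ 1)
    (hpred : #{i ∈ att G c {x} ∪ att G c {y} | i - 1 ∈ posIn c B} ≤ 1)
    (hx : x ∈ S) (hy : y ∈ S) : 4 * δ ≤ n + 2 * #S := by
  set U := att G c {x} ∪ att G c {y} with hUdef
  obtain ⟨b, hb⟩ := hBne
  have hxcard := h.le_card_att hδ
  have hycard := h.symm.le_card_att hδ
  have hUcard : #U + #(att G c {x} ∩ att G c {y}) = #(att G c {x}) + #(att G c {y}) :=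
    card_union_add_card_inter _ _
  have hxU : #(att G c {x}) ≤ #U := card_le_card subset_union_left
  have hle := h.card_le hc h2
  rw [← hUdef] at hle
  have hScard := h.card_posIn_add_two_le hc hx hy
  rcases le_or_gt δ (#(posIn c S) + 1) with hδS | hδS
  · omega
  obtain ⟨k, hk⟩ := hcut.exists_mem_left h.sparse hδ hAne hδS
  obtain ⟨l, hl⟩ : ∃ l, c l = b := by simpa [Off] using hB b hb
  obtain ⟨i, hiB, hiS⟩ := hcut.exists_notMem_succ_mem hc hk (hl ▸ hb)
  have hcount := h.two_mul_card_add_le hc h2 (posIn c B)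
  rw [← hUdef] at hcount
  have hinter := hcut.card_posIn_inter_add_one_le hc hiS hiB U
  have hsplit := card_sdiff_add_card_inter (posIn c B) U
  have hBpos := hc.card_posIn hB
  by_cases hout : ∃ j ∉ U, c j ∈ B
  · obtain ⟨j, hjU, hjB⟩ := hout
    rw [hUdef, mem_union, mem_att_singleton, mem_att_singleton, not_or] at hjU
    have hdeg := hcut.degree_add_card_le hjB
      (insert_subset hx (singleton_subset_iff.2 hy)) (by simpa using hjU)
    rw [card_pair h.adj.ne] at hdeg
    have := hδ (c j)
    omega
  · push Not at hout
    have hsucc0 : #{j ∈ U | j + 1 ∈ posIn c B} = 0 := card_eq_zero.2 <|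
      filter_eq_empty_iff.2 fun j hj hjB => hout _ (h.succ_notMem hc hj) (mem_posIn.1 hjB)
    have hpred0 : #{j ∈ U | j - 1 ∈ posIn c B} = 0 := card_eq_zero.2 <|
      filter_eq_empty_iff.2 fun j hj hjB => hout (j - 1)
        (fun hj' => h.succ_notMem hc hj' (by rwa [sub_add_cancel])) (mem_posIn.1 hjB)
    have hdeg := hcut.degree_add_card_le hb (empty_subset S) (by simp)
    have := hδ b
    omega

lemma IsCut.card_filter_succ_le_one (hcut : IsCut G A B S) (hc : IsMaxCycle G c) {H : Finset V}
    (hH : IsComp G c H) (hδ : ∀ v, δ ≤ G.degree v) (hA : ∀ a ∈ A, ¬ Off c a)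
    (hlt : #(outerEdges c B) + #(offPart c S) < 2 * δ) :
    #{i ∈ att G c H | i + 1 ∈ posIn c A} ≤ 1 := by
  simp only [card_le_one, mem_filter, mem_posIn]
  intro i hi j hj
  by_contra hij
  exact hlt.not_ge (hcut.two_mul_le_of_succ hc hH hδ hA hi.1 hj.1 hij hi.2 hj.2)

lemma IsCut.card_filter_pred_le_one (hcut : IsCut G A B S) (hc : IsMaxCycle G c) {H : Finset V}
    (hH : IsComp G c H) (hδ : ∀ v, δ ≤ G.degree v) (hA : ∀ a ∈ A, ¬ Off c a)
    (hlt : #(outerEdges c B) + #(offPart c S) < 2 * δ) :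
    #{i ∈ att G c H | i - 1 ∈ posIn c A} ≤ 1 := by
  simp only [card_le_one, mem_filter, mem_posIn]
  intro i hi j hj
  by_contra hij
  exact hlt.not_ge (hcut.two_mul_le_of_pred hc hH hδ hA hi.1 hj.1 hij hi.2 hj.2)

lemma IsCut.four_mul_le_of_lt (hcut : IsCut G A B S) (hc : IsMaxCycle G c)
    (h : IsOffEdge G c x y) (h4 : KConnected G 4) (hδ : ∀ v, δ ≤ G.degree v)
    (hA : A.Nonempty) (hB : B.Nonempty)
    (hlt : #(outerEdges c A) + #(offPart c S) < 2 * δ) : 4 * δ ≤ n + 2 * #S := by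
  by_contra! hn
  have h2 : KConnected G 2 := kConnected_of_le h4 (by norm_num)
  have hS := hcut.le_card_of_kConnected h4 hA hB
  have hBon : ∀ b ∈ B, ¬ Off c b := fun b hb hoff =>
    hlt.not_ge (hcut.symm.two_mul_le_of_off hc h.sparse h2 hδ hS hn hb hoff)
  have hsucc := hcut.symm.card_filter_succ_le_one hc h.isComp hδ hBon hlt
  have hpred := hcut.symm.card_filter_pred_le_one hc h.isComp hδ hBon hlt
  rw [att_pair] at hsucc hpred
  rcases hcut.cover x with hx | hx | hx
  · rw [union_comm] at hsucc hpred
    have := hcut.four_mul_le_of_mem hc h.symm h2 hδ hB hBon hsucc hpred hx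
    omega
  · exact hBon x hx h.left
  rcases hcut.cover y with hy | hy | hy
  · have := hcut.four_mul_le_of_mem hc h h2 hδ hB hBon hsucc hpred hy
    omega
  · exact hBon y hy h.right
  · exact hn.not_ge (hcut.four_mul_le_of_mem_sep hc h h2 hδ hA hB hBon hsucc hpred hx hy)

lemma IsCut.bound_of_isOffEdge (hcut : IsCut G A B S) (hc : IsMaxCycle G c)
    (h : IsOffEdge G c x y) (h4 : KConnected G 4) (hδ : ∀ v, δ ≤ G.degree v)
    (hA : A.Nonempty) (hB : B.Nonempty) : 4 * δ ≤ n + 2 * #S := by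
  rcases lt_or_ge (#(outerEdges c A) + #(offPart c S)) (2 * δ) with hlt | hleA
  · exact hcut.four_mul_le_of_lt hc h h4 hδ hA hB hlt
  rcases lt_or_ge (#(outerEdges c B) + #(offPart c S)) (2 * δ) with hlt | hleB
  · exact hcut.symm.four_mul_le_of_lt hc h h4 hδ hB hA hlt
  · exact hcut.four_mul_le hc hleB hleA

end Separator

section Components

variable {G : SimpleGraph V} {n : ℕ} {c : ZMod n → V} {δ : ℕ} {x y : V}

lemma exists_isComp [Finite V] {z : V} (hz : Off c z) : ∃ H, IsComp G c H ∧ z ∈ H := by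
  have := Fintype.ofFinite V
  have hne : (univ.filter fun H : Finset V => ConnSet G H ∧ z ∈ H ∧ ∀ k, c k ∉ H).Nonempty :=
    ⟨{z}, by simpa [connSet_singleton, Off] using hz⟩
  obtain ⟨H, hH, hmax⟩ := exists_max_image _ card hne
  simp only [mem_filter, mem_univ, true_and] at hH hmax
  obtain ⟨hconn, hzH, hoff⟩ := hH
  refine ⟨H, ⟨hconn, hoff, fun a ha b hab => ?_⟩, hzH⟩
  by_contra! hb
  have hle := hmax (insert b H) ⟨hconn.insert ha hab, mem_insert_of_mem hzH, fun k hk =>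
    (mem_insert.1 hk).elim (hb.2 k) (hoff k)⟩
  rw [card_insert_of_notMem hb.1] at hle
  omega

variable [Fintype V] [NeZero n]

lemma bound_of_not_sparseOff (hc : IsMaxCycle G c) (h4 : KConnected G 4)
    (hδ : ∀ v, δ ≤ G.degree v) (hs : ¬ SparseOff G c) : 4 * δ ≤ n + 8 := by
  simp only [SparseOff, not_forall] at hs
  obtain ⟨z, a, b, hz, ha, hb, hza, hzb, hab⟩ := hs
  obtain ⟨H, hH, hzH⟩ := exists_isComp (G := G) hz
  have haH : a ∈ H := (hH.closed z hzH a hza).resolve_right fun ⟨k, hk⟩ => ha k hk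
  have hbH : b ∈ H := (hH.closed z hzH b hzb).resolve_right fun ⟨k, hk⟩ => hb k hk
  have hcard : 3 ≤ #H :=
    two_lt_card.2 ⟨z, hzH, a, haH, b, hbH, hza.ne, hzb.ne, hab⟩
  by_cases h2 : ∀ v ∈ H, ConnSet G (H.erase v)
  · exact hH.bound_of_two_connected hc h4 hδ hcard h2
  · push Not at h2
    obtain ⟨v, hv, hcut⟩ := h2
    exact hH.bound_of_cut_vertex hc h4 hδ hv (by omega) hcut

lemma IsOffEdge.bound (hc : IsMaxCycle G c) (h : IsOffEdge G c x y) (h4 : KConnected G 4)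
    (hδ : ∀ v, δ ≤ G.degree v) : 4 * δ ≤ n + 2 * connectivity G := by
  rcases lt_or_ge (connectivity G + 1) (Fintype.card V) with hlt | hge
  · obtain ⟨A, B, S, hA, hB, hcut, hS⟩ := exists_min_cut hlt
    have := hcut.bound_of_isOffEdge hc h h4 hδ hA hB
    omega
  · have hle := h.card_le hc (kConnected_of_le h4 (by norm_num))
    have hxcard := h.le_card_att hδ
    have hycard := h.symm.le_card_att hδ
    have hxy := card_union_add_card_inter (att G c {x}) (att G c {y})
    have hxU : #(att G c {x}) ≤ #(att G c {x} ∪ att G c {y}) := card_le_card subset_union_left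
    have hdeg := (hδ x).trans_lt (G.degree_lt_card_verts x)
    have hκ := le_connectivity h4
    omega

lemma IsMaxCycle.bound (hc : IsMaxCycle G c) (h4 : KConnected G 4) (hδ : ∀ v, δ ≤ G.degree v)
    (hxy : G.Adj x y) (hx : Off c x) (hy : Off c y) : 4 * δ ≤ n + 2 * connectivity G := by
  by_cases hs : SparseOff G c
  · exact IsOffEdge.bound hc ⟨hs, hxy, hx, hy⟩ h4 hδ
  · have := bound_of_not_sparseOff hc h4 hδ hs
    have hκ := le_connectivity h4
    omega

end Components

section Domination

variable {G : SimpleGraph V} {v z : V} {w : G.Walk v v}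

lemma off_getVert (hz : z ∉ w.support) : Off (fun i : ZMod w.length => w.getVert i.val) z := by
  rintro k rfl
  exact hz (w.getVert_mem_support _)

lemma isDominatingCycle_of_lt [Fintype V] [DecidableRel G.Adj] (hw : IsLongestCycle w)
    (h4 : KConnected G 4) (hlt : w.length + 2 * connectivity G < 4 * G.minDegree) :
    IsDominatingCycle w := by
  refine ⟨hw.1, fun x y hxy => ?_⟩
  by_contra! hoff
  have : NeZero w.length := ⟨by have := hw.1.three_le_length; omega⟩
  exact hlt.not_ge ((isMaxCycle_getVert hw).bound h4
    (fun u => by convert G.minDegree_le_degree u) hxy (off_getVert hoff.1) (off_getVert hoff.2))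

end Domination

end LongestCycle

theorem nikoghosyan_2011_dominating (G : SimpleGraph V) [Fintype V] [DecidableRel G.Adj]
    (h4 : KConnected G 4) :
    (circumference G : ℤ) ≥ 4 * G.minDegree - 2 * connectivity G ∨
      ∃ (v : V) (w : G.Walk v v), IsDominatingCycle w := by
  obtain ⟨_, _, hcycle⟩ := LongestCycle.exists_isCycle_of_kConnected h4 (by norm_num)
  obtain ⟨v, w, hw⟩ := LongestCycle.exists_isLongestCycle hcycle
  rcases lt_or_ge (w.length + 2 * connectivity G) (4 * G.minDegree) with hlt | hge
  · exact .inr ⟨v, w, LongestCycle.isDominatingCycle_of_lt hw h4 hlt⟩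
  · left
    have := LongestCycle.length_le_circumference hw.1
    omega
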